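/- arXiv:1709.03127 — 2 statements merged into one kernel-verified Lean document; each statement's English description precedes it below -/
import Mathlib

section
/- Let {t_k}_{k≥0} be a decreasing sequence of dyadic stopping times. Then there is a constant C, depending only on n, such that for every sequence {h_k}_{k≥0} of measurable functions on ℝ^n with ‖(Σ_{k≥0} |h_k|²)^{1/2}‖_{L^1(ℝ^n)} < ∞ and every α > 0, |{x ∈ ℝ^n : |Σ_{k≥0} (E_{t_{k+1}} h_k(x) − E_{t_k} h_k(x))| > α}| ≤ (C/α) ‖(Σ_{k≥0} |h_k|²)^{1/2}‖_{L^1(ℝ^n)}; C is independent of α, {h_k}, and the stopping times. -/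
open MeasureTheory ENNReal NNReal
noncomputable section

/-- The dyadic cube of side length `2^j` (from the grid `∏ (m_i 2^j, (m_i+1) 2^j]`)
containing the point `x`. -/
def dyadicCubeOf (n : ℕ) (j : ℤ) (x : EuclideanSpace ℝ (Fin n)) :
    Set (EuclideanSpace ℝ (Fin n)) :=
  {y | ∀ i, ((⌈x i / (2:ℝ) ^ j⌉ : ℝ) - 1) * (2:ℝ) ^ j < y i ∧
        y i ≤ (⌈x i / (2:ℝ) ^ j⌉ : ℝ) * (2:ℝ) ^ j}

/-- The dyadic conditional expectation `E_j f (x)`: the average of `f` over the dyadic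
cube of side length `2^j` containing `x`. -/
def dyadicAvg (n : ℕ) (j : ℤ) (f : EuclideanSpace ℝ (Fin n) → ℝ)
    (x : EuclideanSpace ℝ (Fin n)) : ℝ :=
  ⨍ y in dyadicCubeOf n j x, f y

/-- The (half-open) cube with corner `a` and side length `ℓ`. -/
def cube (n : ℕ) (a : EuclideanSpace ℝ (Fin n)) (ℓ : ℝ) :
    Set (EuclideanSpace ℝ (Fin n)) :=
  {y | ∀ i, a i < y i ∧ y i ≤ a i + ℓ}

/-- `t : ℝⁿ → ℤ` is a dyadic stopping time: it is measurable and each level set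
`{t = j}` is a union of dyadic cubes in `𝒟_j`, i.e. `t` is constant on the dyadic cube
of scale `t x` containing `x`. -/
def IsDyadicStopping (n : ℕ) (t : EuclideanSpace ℝ (Fin n) → ℤ) : Prop :=
  Measurable t ∧ ∀ x y, y ∈ dyadicCubeOf n (t x) x → t y = t x


abbrev EE (n : ℕ) := EuclideanSpace ℝ (Fin n)

lemma mem_cube_iff {n : ℕ} {j : ℤ} {x y : EE n} :
    y ∈ dyadicCubeOf n j x ↔ ∀ i, ⌈y i / (2:ℝ) ^ j⌉ = ⌈x i / (2:ℝ) ^ j⌉ := by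
  have h2 : (0:ℝ) < (2:ℝ) ^ j := by positivity
  simp only [dyadicCubeOf, Set.mem_ofPred_eq]
  refine forall_congr' fun i => ?_
  rw [Int.ceil_eq_iff, lt_div_iff₀ h2, div_le_iff₀ h2]

lemma self_mem {n : ℕ} (j : ℤ) (x : EE n) : x ∈ dyadicCubeOf n j x := by
  rw [mem_cube_iff]; intro i; rfl

lemma cube_eq {n : ℕ} {j : ℤ} {x y : EE n} (h : y ∈ dyadicCubeOf n j x) :
    dyadicCubeOf n j y = dyadicCubeOf n j x := by
  rw [mem_cube_iff] at h
  ext z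
  simp only [mem_cube_iff, h]

lemma cube_sub_succ {n : ℕ} (j : ℤ) (x : EE n) :
    dyadicCubeOf n j x ⊆ dyadicCubeOf n (j + 1) x := by
  intro y hy
  rw [mem_cube_iff] at hy ⊢
  intro i
  have h2 : (0:ℝ) < (2:ℝ) ^ j := by positivity
  have key : ∀ z : ℝ, ⌈z / (2:ℝ) ^ (j + 1)⌉ = ⌈(⌈z / (2:ℝ) ^ j⌉ : ℝ) / 2⌉ := by
    intro z
    apply eq_of_forall_ge_iff
    intro c
    rw [Int.ceil_le, Int.ceil_le, zpow_add₀ (by norm_num), zpow_one, ← div_div,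
      div_le_iff₀ (by norm_num : (0:ℝ) < 2), div_le_iff₀ (by norm_num : (0:ℝ) < 2)]
    have e : (c : ℝ) * 2 = ((c * 2 : ℤ) : ℝ) := by push_cast; ring
    rw [e, Int.cast_le, Int.ceil_le]
  rw [key, key, hy i]

lemma cube_mono {n : ℕ} {j k : ℤ} (h : j ≤ k) (x : EE n) :
    dyadicCubeOf n j x ⊆ dyadicCubeOf n k x := by
  obtain ⟨m, rfl⟩ := Int.le.dest h
  induction m with
  | zero => simp
  | succ m ih =>
    refine (ih (by omega)).trans ?_
    have := cube_sub_succ (j + m) x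
    push_cast
    rwa [← add_assoc]

lemma cube_eq_preimage {n : ℕ} (j : ℤ) (x : EE n) :
    dyadicCubeOf n j x = (WithLp.ofLp : EE n → (Fin n → ℝ)) ⁻¹'
      (Set.univ.pi fun i => Set.Ioc (((⌈x i / (2:ℝ) ^ j⌉ : ℝ) - 1) * (2:ℝ) ^ j)
        ((⌈x i / (2:ℝ) ^ j⌉ : ℝ) * (2:ℝ) ^ j)) := by
  ext y; simp [dyadicCubeOf, Set.mem_pi]

lemma cube_meas {n : ℕ} (j : ℤ) (x : EE n) : MeasurableSet (dyadicCubeOf n j x) := by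
  rw [cube_eq_preimage]
  exact (MeasurableSet.univ_pi fun i => measurableSet_Ioc).preimage (by fun_prop)

lemma cube_vol {n : ℕ} (j : ℤ) (x : EE n) :
    volume (dyadicCubeOf n j x) = ENNReal.ofReal (((2:ℝ) ^ j) ^ n) := by
  rw [cube_eq_preimage, (PiLp.volume_preserving_ofLp (Fin n)).measure_preimage]
  · rw [Real.volume_pi_Ioc]
    have : ∀ z : ℝ, z * 2 ^ j - (z - 1) * 2 ^ j = (2:ℝ) ^ j := by intro z; ring
    simp [this]
    rw [ENNReal.ofReal_pow (by positivity)]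
  · exact (MeasurableSet.univ_pi fun i => measurableSet_Ioc).nullMeasurableSet

lemma cube_vol_ne_top {n : ℕ} (j : ℤ) (x : EE n) : volume (dyadicCubeOf n j x) ≠ ⊤ := by
  rw [cube_vol]; exact ENNReal.ofReal_ne_top

lemma cube_vol_ne_zero {n : ℕ} (j : ℤ) (x : EE n) : volume (dyadicCubeOf n j x) ≠ 0 := by
  rw [cube_vol]; simp; positivity

lemma cube_vol_succ {n : ℕ} (j : ℤ) (x : EE n) :
    volume (dyadicCubeOf n (j + 1) x) = 2 ^ n * volume (dyadicCubeOf n j x) := by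
  rw [cube_vol, cube_vol, zpow_add₀ (by norm_num), zpow_one, mul_pow, mul_comm,
    ENNReal.ofReal_mul (by positivity), ENNReal.ofReal_pow (by norm_num)]
  simp

/-- scale-j label -/
def lab (n : ℕ) (j : ℤ) (x : EE n) : Fin n → ℤ := fun i => ⌈x i / (2:ℝ) ^ j⌉

lemma lab_meas {n : ℕ} (j : ℤ) : Measurable (lab n j) := by
  unfold lab
  refine measurable_pi_lambda _ fun i => ?_
  apply Int.measurable_ceil.comp
  fun_prop

lemma mem_cube_iff_lab {n : ℕ} {j : ℤ} {x y : EE n} :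
    y ∈ dyadicCubeOf n j x ↔ lab n j y = lab n j x := by
  rw [mem_cube_iff, funext_iff]; rfl

/-- functions constant on cubes of scale `j` are measurable -/
lemma meas_of_const {n : ℕ} {β : Type*} [MeasurableSpace β] [Nonempty β] (j : ℤ) (F : EE n → β)
    (hF : ∀ x y, y ∈ dyadicCubeOf n j x → F y = F x) : Measurable F := by
  classical
  have : F = (fun l => if h : ∃ x, lab n j x = l then F h.choose else Classical.arbitrary β) ∘ lab n j := by
    funext x
    have hx : ∃ y, lab n j y = lab n j x := ⟨x, rfl⟩
    simp only [Function.comp]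
    rw [dif_pos hx]
    exact (hF _ _ (mem_cube_iff_lab.2 hx.choose_spec)).symm
  rw [this]
  exact (measurable_of_countable _).comp (lab_meas j)

lemma meas_glue {n : ℕ} {β : Type*} [MeasurableSpace β] (s : EE n → ℤ) (hs : Measurable s)
    (F : ℤ → EE n → β) (hF : ∀ j, Measurable (F j)) : Measurable fun x => F (s x) x := by
  have : Measurable (fun p : ℤ × EE n => F p.1 p.2) := measurable_from_prod_countable_right hF
  exact this.comp (hs.prodMk measurable_id)

lemma avg_const {n : ℕ} {j : ℤ} (f : EE n → ℝ) {x y : EE n} (h : y ∈ dyadicCubeOf n j x) :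
    dyadicAvg n j f y = dyadicAvg n j f x := by
  unfold dyadicAvg; rw [cube_eq h]

lemma avg_meas {n : ℕ} (s : EE n → ℤ) (hs : Measurable s) (f : EE n → ℝ) :
    Measurable fun x => dyadicAvg n (s x) f x :=
  meas_glue s hs (fun j => dyadicAvg n j f) fun j => meas_of_const j _ fun _ _ h => avg_const f h

def Sat {n : ℕ} (s : EE n → ℤ) (A : Set (EE n)) : Prop :=
  MeasurableSet A ∧ ∀ x ∈ A, ∀ y ∈ dyadicCubeOf n (s x) x, y ∈ A ∧ s y = s x

def piece {n : ℕ} (s : EE n → ℤ) (A : Set (EE n)) (i : ℤ × (Fin n → ℤ)) : Set (EE n) :=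
  A ∩ {x | (s x, lab n (s x) x) = i}

lemma piece_meas {n : ℕ} {s : EE n → ℤ} (hs : Measurable s) {A : Set (EE n)} (hA : MeasurableSet A)
    (i : ℤ × (Fin n → ℤ)) : MeasurableSet (piece s A i) := by
  refine hA.inter ?_
  have : Measurable fun x => (s x, lab n (s x) x) :=
    hs.prodMk (meas_glue s hs (lab n) fun j => lab_meas j)
  exact this (measurableSet_singleton i)

lemma piece_disj {n : ℕ} (s : EE n → ℤ) (A : Set (EE n)) :
    Pairwise (Function.onFun Disjoint (piece s A)) := by
  intro i j hij
  rw [Function.onFun, Set.disjoint_left]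
  rintro x ⟨_, h1⟩ ⟨_, h2⟩
  exact hij (h1.symm.trans h2)

lemma piece_iUnion {n : ℕ} (s : EE n → ℤ) (A : Set (EE n)) : ⋃ i, piece s A i = A := by
  ext x; simp [piece]

lemma piece_eq {n : ℕ} {s : EE n → ℤ} {A : Set (EE n)} (hA : Sat s A) {i : ℤ × (Fin n → ℤ)} {x : EE n}
    (hx : x ∈ piece s A i) : piece s A i = dyadicCubeOf n (s x) x := by
  obtain ⟨hxA, rfl⟩ := hx
  ext y
  constructor
  · rintro ⟨h1, h2⟩
    simp only [Set.mem_ofPred_eq, Prod.mk.injEq] at h2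
    rw [mem_cube_iff_lab, ← h2.2, h2.1]
  · intro hy
    obtain ⟨h1, h2⟩ := hA.2 x hxA y hy
    refine ⟨h1, ?_⟩
    simp only [Set.mem_ofPred_eq, h2, mem_cube_iff_lab.1 hy]

lemma fiber_le {n : ℕ} {s : EE n → ℤ} (hs : Measurable s) {A : Set (EE n)} (hA : Sat s A)
    {u v : EE n → ℝ≥0∞}
    (h : ∀ x ∈ A, ∫⁻ y in dyadicCubeOf n (s x) x, u y ≤ ∫⁻ y in dyadicCubeOf n (s x) x, v y) :
    ∫⁻ y in A, u y ≤ ∫⁻ y in A, v y := by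
  rw [← piece_iUnion s A, lintegral_iUnion (piece_meas hs hA.1) (piece_disj s A),
    lintegral_iUnion (piece_meas hs hA.1) (piece_disj s A)]
  refine ENNReal.tsum_le_tsum fun i => ?_
  rcases (piece s A i).eq_empty_or_nonempty with h0 | ⟨x, hx⟩
  · simp [h0]
  · rw [piece_eq hA hx]; exact h x hx.1

lemma fiber_eq {n : ℕ} {s : EE n → ℤ} (hs : Measurable s) {A : Set (EE n)} (hA : Sat s A)
    {u v : EE n → ℝ} (hu : IntegrableOn u A) (hv : IntegrableOn v A)
    (h : ∀ x ∈ A, ∫ y in dyadicCubeOf n (s x) x, u y = ∫ y in dyadicCubeOf n (s x) x, v y) :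
    ∫ y in A, u y = ∫ y in A, v y := by
  rw [← piece_iUnion s A] at hu hv ⊢
  rw [integral_iUnion (piece_meas hs hA.1) (piece_disj s A) hu,
    integral_iUnion (piece_meas hs hA.1) (piece_disj s A) hv]
  refine tsum_congr fun i => ?_
  rcases (piece s A i).eq_empty_or_nonempty with h0 | ⟨x, hx⟩
  · simp [h0]
  · rw [piece_eq hA hx]; exact h x hx.1

lemma avg_eq {n : ℕ} (j : ℤ) (f : EE n → ℝ) (x : EE n) :
    volume.real (dyadicCubeOf n j x) * dyadicAvg n j f x = ∫ y in dyadicCubeOf n j x, f y := by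
  unfold dyadicAvg
  rw [setAverage_eq, smul_eq_mul, ← mul_assoc, mul_inv_cancel₀, one_mul]
  rw [measureReal_def]
  exact (ENNReal.toReal_pos (cube_vol_ne_zero j x) (cube_vol_ne_top j x)).ne'

lemma setInt_avg {n : ℕ} (j : ℤ) (f : EE n → ℝ) (x : EE n) :
    ∫ y in dyadicCubeOf n j x, dyadicAvg n j f y = ∫ y in dyadicCubeOf n j x, f y := by
  rw [setIntegral_congr_fun (cube_meas j x) (g := fun _ => dyadicAvg n j f x)
    (fun y hy => avg_const f hy), setIntegral_const, smul_eq_mul, avg_eq]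

/-- jensen for absolute value -/
lemma avg_abs_le {n : ℕ} (j : ℤ) (f : EE n → ℝ) (x : EE n) :
    ∫⁻ y in dyadicCubeOf n j x, ‖dyadicAvg n j f y‖ₑ ≤ ∫⁻ y in dyadicCubeOf n j x, ‖f y‖ₑ := by
  rw [setLIntegral_congr_fun (cube_meas j x) (g := fun _ => ‖dyadicAvg n j f x‖ₑ)
    (fun y hy => by simp only [avg_const f hy]), setLIntegral_const]
  refine le_trans ?_ (enorm_integral_le_lintegral_enorm _)
  rw [← avg_eq, enorm_mul, mul_comm]
  gcongr
  rw [measureReal_def, Real.enorm_of_nonneg ENNReal.toReal_nonneg,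
    ENNReal.ofReal_toReal (cube_vol_ne_top j x)]

/-- Conditional expectation preserves integrability and integrals over saturated sets. -/
lemma Es_int {n : ℕ} {s : EE n → ℤ} (hs : Measurable s) {A : Set (EE n)} (hA : Sat s A)
    {f : EE n → ℝ} (hf : IntegrableOn f A) :
    IntegrableOn (fun x => dyadicAvg n (s x) f x) A ∧
    ∫ x in A, dyadicAvg n (s x) f x = ∫ x in A, f x := by
  have hi : IntegrableOn (fun x => dyadicAvg n (s x) f x) A := by
    refine ⟨(avg_meas s hs f).aestronglyMeasurable, ?_⟩
    refine lt_of_le_of_lt ?_ hf.2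
    refine fiber_le hs hA fun x hx => ?_
    rw [setLIntegral_congr_fun (cube_meas _ x) (g := fun y => ‖dyadicAvg n (s x) f y‖ₑ)
      (fun y hy => by simp only [(hA.2 x hx y hy).2])]
    exact avg_abs_le _ _ _
  refine ⟨hi, fiber_eq hs hA hi hf fun x hx => ?_⟩
  rw [setIntegral_congr_fun (cube_meas _ x) (g := fun y => dyadicAvg n (s x) f y)
      (fun y hy => by simp only [(hA.2 x hx y hy).2])]
  exact setInt_avg _ _ _


lemma sq_avg_le {n : ℕ} (j : ℤ) {f : EE n → ℝ} (x : EE n)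
    (hf : IntegrableOn f (dyadicCubeOf n j x)) (hf2 : IntegrableOn (fun y => f y ^ 2) (dyadicCubeOf n j x)) :
    volume.real (dyadicCubeOf n j x) * dyadicAvg n j f x ^ 2 ≤ ∫ y in dyadicCubeOf n j x, f y ^ 2 := by
  set m := dyadicAvg n j f x with hm
  have h0 : 0 ≤ ∫ y in dyadicCubeOf n j x, (f y - m) ^ 2 := integral_nonneg fun y => sq_nonneg _
  have hc : IntegrableOn (fun _ : EE n => m ^ 2) (dyadicCubeOf n j x) :=
    integrableOn_const (cube_vol_ne_top j x)
  have e : ∀ y, (f y - m) ^ 2 = f y ^ 2 - (2 * m) * f y + m ^ 2 := fun y => by ring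
  simp only [e] at h0
  have i1 : IntegrableOn (fun y => (2 * m) * f y) (dyadicCubeOf n j x) := hf.const_mul _
  have i2 : IntegrableOn (fun y => f y ^ 2 - (2 * m) * f y) (dyadicCubeOf n j x) := hf2.sub i1
  rw [integral_add i2 hc, integral_sub hf2 i1,
    integral_const_mul, ← avg_eq j f x, setIntegral_const, smul_eq_mul, ← hm] at h0
  nlinarith

lemma avg_bdd {n : ℕ} (j : ℤ) {f : EE n → ℝ} (x : EE n) {B : ℝ}
    (hB : ∀ᵐ y, |f y| ≤ B) : |dyadicAvg n j f x| ≤ B := by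
  have hpos : 0 < volume.real (dyadicCubeOf n j x) :=
    ENNReal.toReal_pos (cube_vol_ne_zero j x) (cube_vol_ne_top j x)
  have h1 := norm_setIntegral_le_of_norm_le_const_ae (μ := volume) (s := dyadicCubeOf n j x) (f := f) (C := B)
    (cube_vol_ne_top j x).lt_top (ae_restrict_of_ae hB)
  rw [← avg_eq, norm_mul, Real.norm_of_nonneg hpos.le, Real.norm_eq_abs, mul_comm] at h1
  exact le_of_mul_le_mul_right h1 hpos

lemma bdd_int {n : ℕ} {f : EE n → ℝ} (hf : Measurable f) {B : ℝ} (hB : ∀ᵐ y, |f y| ≤ B)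
    {A : Set (EE n)} (hA : volume A ≠ ⊤) : IntegrableOn f A :=
  Measure.integrableOn_of_bounded hA hf.aestronglyMeasurable (ae_restrict_of_ae hB)

lemma bdd_sq_int {n : ℕ} {f : EE n → ℝ} (hf : Measurable f) {B : ℝ} (hB : ∀ᵐ y, |f y| ≤ B)
    {A : Set (EE n)} (hA : volume A ≠ ⊤) : IntegrableOn (fun y => f y ^ 2) A :=
  bdd_int (B := B ^ 2) (hf.pow_const 2) (by
    filter_upwards [hB] with y hy
    rw [abs_pow]; gcongr) hA

lemma Es_sq_le {n : ℕ} {s : EE n → ℤ} (hs : Measurable s) {A : Set (EE n)} (hA : Sat s A)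
    (hAf : volume A ≠ ⊤)
    {f : EE n → ℝ} (hf : Measurable f) {B : ℝ} (hB : ∀ᵐ y, |f y| ≤ B) :
    ∫ x in A, dyadicAvg n (s x) f x ^ 2 ≤ ∫ x in A, f x ^ 2 := by
  have hB' : ∀ᵐ x, |dyadicAvg n (s x) f x| ≤ B := ae_of_all _ fun x => avg_bdd _ x hB
  have i1 := bdd_sq_int (avg_meas s hs f) hB' hAf
  have i2 := bdd_sq_int hf hB hAf
  rw [← ENNReal.ofReal_le_ofReal_iff (integral_nonneg fun y => sq_nonneg _),
    ofReal_integral_eq_lintegral_ofReal i1 (ae_of_all _ fun y => sq_nonneg _),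
    ofReal_integral_eq_lintegral_ofReal i2 (ae_of_all _ fun y => sq_nonneg _)]
  refine fiber_le hs hA fun x hx => ?_
  have hv := cube_vol_ne_top (s x) x
  rw [← ofReal_integral_eq_lintegral_ofReal (bdd_sq_int (avg_meas s hs f) hB' hv)
     (ae_of_all _ fun y => sq_nonneg _),
    ← ofReal_integral_eq_lintegral_ofReal (bdd_sq_int hf hB hv) (ae_of_all _ fun y => sq_nonneg _)]
  apply ENNReal.ofReal_le_ofReal
  rw [setIntegral_congr_fun (cube_meas _ x) (g := fun y => dyadicAvg n (s x) f x ^ 2)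
      (fun y hy => by simp only [(hA.2 x hx y hy).2, avg_const f hy]), setIntegral_const, smul_eq_mul]
  exact sq_avg_le _ _ (bdd_int hf hB hv) (bdd_sq_int hf hB hv)

/-- local L² step -/
lemma local_step {n : ℕ} {s : EE n → ℤ} (hs : Measurable s) (j : ℤ) (x : EE n)
    (hA : Sat s (dyadicCubeOf n j x))
    {f : EE n → ℝ} (hf : Measurable f) {B : ℝ} (hB : ∀ᵐ y, |f y| ≤ B) (c : ℝ) :
    ∫⁻ y in dyadicCubeOf n j x, ENNReal.ofReal ((c + (dyadicAvg n (s y) f y - dyadicAvg n j f x)) ^ 2)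
    ≤ ∫⁻ y in dyadicCubeOf n j x, (ENNReal.ofReal (c ^ 2) + ENNReal.ofReal (f y ^ 2)) := by
  set Q := dyadicCubeOf n j x with hQ
  set m := dyadicAvg n j f x with hm
  have hv : volume Q ≠ ⊤ := cube_vol_ne_top j x
  have hB' : ∀ᵐ x, |dyadicAvg n (s x) f x| ≤ B := ae_of_all _ fun x => avg_bdd _ x hB
  have em := avg_meas s hs f
  have i1 := bdd_int em hB' hv
  have i2 := bdd_sq_int em hB' hv
  have i3 := bdd_int hf hB hv
  have i4 := bdd_sq_int hf hB hv
  have ic : ∀ c : ℝ, IntegrableOn (fun _ : EE n => c) Q := fun c => integrableOn_const hv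
  have e : ∀ y, (c + (dyadicAvg n (s y) f y - m)) ^ 2 = (dyadicAvg n (s y) f y ^ 2 +
      (2 * (c - m)) * dyadicAvg n (s y) f y) + (c - m) ^ 2 := fun y => by ring
  simp only [e]
  have i6 : IntegrableOn (fun y => (2 * (c - m)) * dyadicAvg n (s y) f y) Q := i1.const_mul _
  have i7 : IntegrableOn (fun y => dyadicAvg n (s y) f y ^ 2 +
      (2 * (c - m)) * dyadicAvg n (s y) f y) Q := i2.add i6
  have i8 : IntegrableOn (fun y => c ^ 2 + f y ^ 2) Q := (ic _).add i4
  have i5 : IntegrableOn (fun y => (dyadicAvg n (s y) f y ^ 2 +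
      (2 * (c - m)) * dyadicAvg n (s y) f y) + (c - m) ^ 2) Q :=
    i7.add (ic _)
  simp only [← ENNReal.ofReal_add (sq_nonneg c) (sq_nonneg _)]
  rw [← ofReal_integral_eq_lintegral_ofReal i5 (ae_of_all _ fun y => by
      simp only [← e]; exact sq_nonneg _),
    ← ofReal_integral_eq_lintegral_ofReal i8 (ae_of_all _ fun y => by
      simp only [Pi.zero_apply]; positivity)]
  apply ENNReal.ofReal_le_ofReal
  rw [integral_add i7 (ic _), integral_add i2 i6,
    integral_const_mul, (Es_int hs hA i3).2, ← avg_eq j f x, integral_add (ic _) i4, setIntegral_const,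
    setIntegral_const, smul_eq_mul, smul_eq_mul, ← hm, ← hQ]
  have h1 := Es_sq_le hs hA hv hf hB
  have h2 : 0 ≤ volume.real Q * m ^ 2 := by positivity
  nlinarith

lemma stop_const {n : ℕ} {t : ℕ → EE n → ℤ} (ht : ∀ k, IsDyadicStopping n (t k))
    (hd : ∀ k x, t (k + 1) x ≤ t k x) {k N : ℕ} (hk : k ≤ N) {x y : EE n}
    (hy : y ∈ dyadicCubeOf n (t N x) x) :
    y ∈ dyadicCubeOf n (t k x) x ∧ t k y = t k x := by
  have hle : t N x ≤ t k x := antitone_nat_of_succ_le (f := fun k => t k x) (fun k => hd k x) hk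
  have := cube_mono hle x hy
  exact ⟨this, (ht k).2 x y this⟩

lemma L2_bound {n : ℕ} {t : ℕ → EE n → ℤ} (ht : ∀ k, IsDyadicStopping n (t k))
    (hd : ∀ k x, t (k + 1) x ≤ t k x) {g : ℕ → EE n → ℝ} (hg : ∀ k, Measurable (g k)) {B : ℝ}
    (hB : ∀ k, ∀ᵐ y, |g k y| ≤ B) (N : ℕ) :
    ∫⁻ x, ENNReal.ofReal ((∑ k ∈ Finset.range N,
      (dyadicAvg n (t (k + 1) x) (g k) x - dyadicAvg n (t k x) (g k) x)) ^ 2) ≤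
    ∫⁻ x, ∑ k ∈ Finset.range N, ENNReal.ofReal (g k x ^ 2) := by
  induction N with
  | zero => simp
  | succ N ih =>
    simp only [Finset.sum_range_succ]
    rw [lintegral_add_right _ ((hg N).pow_const 2).ennreal_ofReal]
    refine le_trans ?_ (add_le_add_left ih _)
    rw [← lintegral_add_right _ ((hg N).pow_const 2).ennreal_ofReal]
    have hU : Sat (t N) Set.univ := ⟨MeasurableSet.univ, fun x _ y hy => ⟨trivial, (ht N).2 x y hy⟩⟩
    rw [← setLIntegral_univ, ← setLIntegral_univ (f := fun a => _ + _)]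
    refine fiber_le (ht N).1 hU fun x _ => ?_
    have hS : Sat (t (N + 1)) (dyadicCubeOf n (t N x) x) := by
      refine ⟨cube_meas _ _, fun y hy z hz => ?_⟩
      refine ⟨?_, (ht (N+1)).2 y z hz⟩
      rw [← cube_eq hy]
      refine cube_mono ?_ y hz
      rw [← (ht N).2 x y hy]
      exact hd N y
    have key := local_step (ht (N+1)).1 (t N x) x hS (hg N) (hB N) (∑ k ∈ Finset.range N,
      (dyadicAvg n (t (k + 1) x) (g k) x - dyadicAvg n (t k x) (g k) x))
    have hc : ∀ y ∈ dyadicCubeOf n (t N x) x, ∑ k ∈ Finset.range N,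
      (dyadicAvg n (t (k + 1) y) (g k) y - dyadicAvg n (t k y) (g k) y) = ∑ k ∈ Finset.range N,
      (dyadicAvg n (t (k + 1) x) (g k) x - dyadicAvg n (t k x) (g k) x) := by
      intro y hy
      refine Finset.sum_congr rfl fun k hk => ?_
      have hk := Finset.mem_range.1 hk
      obtain ⟨a1, a2⟩ := stop_const ht hd (k := k) hk.le hy
      obtain ⟨b1, b2⟩ := stop_const ht hd (k := k + 1) hk hy
      rw [a2, b2, avg_const _ a1, avg_const _ b1]
    convert key using 1
    · refine setLIntegral_congr_fun (cube_meas _ _) fun y hy => ?_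
      simp only [hc y hy, (ht N).2 x y hy, avg_const _ hy]
    · refine setLIntegral_congr_fun (cube_meas _ _) fun y hy => ?_
      simp only [hc y hy]


/-- Lebesgue differentiation along dyadic cubes -/
lemma dyadic_lebesgue {n : ℕ} {f : EE n → ℝ} (hf : Integrable f) :
    ∀ᵐ x, Filter.Tendsto (fun k : ℕ => dyadicAvg n (-(k:ℤ)) f x) Filter.atTop (nhds (f x)) := by
  have mp := PiLp.volume_preserving_ofLp (Fin n)
  have mp' := PiLp.volume_preserving_toLp (Fin n)
  have hemb : MeasurableEmbedding (WithLp.ofLp : EE n → (Fin n → ℝ)) :=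
    (MeasurableEquiv.toLp 2 (Fin n → ℝ)).symm.measurableEmbedding
  have hF : Integrable (fun z : Fin n → ℝ => f (WithLp.toLp 2 z)) :=
    mp'.integrable_comp_of_integrable hf
  have h := IsUnifLocDoublingMeasure.ae_tendsto_average (μ := (volume : Measure (Fin n → ℝ)))
    hF.locallyIntegrable 1
  have h' := mp.quasiMeasurePreserving.ae h
  have hball : ∀ (x : EE n) (k : ℕ), Metric.closedBall (fun i => ((⌈x i / (2:ℝ) ^ (-(k:ℤ))⌉ : ℝ) - 1/2) * (2:ℝ) ^ (-(k:ℤ)))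
      ((2:ℝ) ^ (-(k:ℤ)) / 2) = Set.univ.pi fun i => Set.Icc (((⌈x i / (2:ℝ) ^ (-(k:ℤ))⌉ : ℝ) - 1) * (2:ℝ) ^ (-(k:ℤ)))
        ((⌈x i / (2:ℝ) ^ (-(k:ℤ))⌉ : ℝ) * (2:ℝ) ^ (-(k:ℤ))) := by
    intro x k
    rw [closedBall_pi _ (by positivity)]
    congr 1
    funext i
    rw [Real.closedBall_eq_Icc]
    congr 1 <;> ring
  filter_upwards [h'] with x hx
  have := hx (l := Filter.atTop) (fun k : ℕ => fun i => ((⌈x i / (2:ℝ) ^ (-(k:ℤ))⌉ : ℝ) - 1/2) * (2:ℝ) ^ (-(k:ℤ)))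
    (fun k : ℕ => (2:ℝ) ^ (-(k:ℤ)) / 2) ?_ ?_
  · refine this.congr fun k => ?_
    unfold dyadicAvg
    rw [hball, Set.pi_univ_Icc, ← setAverage_congr (μ := (volume : Measure (Fin n → ℝ)))
      (Measure.univ_pi_Ioc_ae_eq_Icc (μ := fun _ : Fin n => (volume : Measure ℝ)))]
    rw [setAverage_eq, setAverage_eq, cube_eq_preimage, ← mp.setIntegral_preimage_emb hemb,
      measureReal_def, measureReal_def,
      mp.measure_preimage (MeasurableSet.univ_pi fun i => measurableSet_Ioc).nullMeasurableSet]
  · rw [tendsto_nhdsWithin_iff]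
    refine ⟨?_, Filter.Eventually.of_forall fun k => by simp⟩
    have := (tendsto_pow_atTop_nhds_zero_of_lt_one (r := (1/2:ℝ)) (by norm_num) (by norm_num)).div_const 2
    simpa using this
  · refine Filter.Eventually.of_forall fun k => ?_
    rw [one_mul, hball]
    intro i _
    have := self_mem (-(k:ℤ)) x i
    exact ⟨this.1.le, this.2⟩

/-- maximal function control -/
lemma le_of_not_bad {n : ℕ} {H : EE n → ℝ≥0∞} (hH : Measurable H) (hfin : ∫⁻ x, H x < ⊤) {α : ℝ}
    (hα : 0 < α) : ∀ᵐ x, (∀ j, ∫⁻ y in dyadicCubeOf n j x, H y ≤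
      ENNReal.ofReal α * volume (dyadicCubeOf n j x)) → H x ≤ ENNReal.ofReal α := by
  have hint : Integrable (fun x => (H x).toReal) := integrable_toReal_of_lintegral_ne_top hH.aemeasurable hfin.ne
  have hae := ae_lt_top hH hfin.ne
  filter_upwards [dyadic_lebesgue hint, hae] with x hx hx2 hj
  rw [← ENNReal.ofReal_toReal hx2.ne]
  apply ENNReal.ofReal_le_ofReal
  refine le_of_tendsto' hx fun k => ?_
  have hpos : 0 < volume.real (dyadicCubeOf n (-(k:ℤ)) x) :=
    ENNReal.toReal_pos (cube_vol_ne_zero _ x) (cube_vol_ne_top _ x)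
  refine le_of_mul_le_mul_left ?_ hpos
  rw [avg_eq, integral_toReal hH.aemeasurable (ae_restrict_of_ae hae)]
  have := ENNReal.toReal_mono (ENNReal.mul_ne_top ENNReal.ofReal_ne_top (cube_vol_ne_top _ x)) (hj (-(k:ℤ)))
  rw [ENNReal.toReal_mul, ENNReal.toReal_ofReal hα.le] at this
  rw [mul_comm]; exact this

lemma cz_exists {n : ℕ} (hn : 1 ≤ n) {H : EE n → ℝ≥0∞} (hfin : ∫⁻ x, H x < ⊤) {α : ℝ}
    (hα : 0 < α) : ∃ (Ω : Set (EE n)) (s : EE n → ℤ), Measurable s ∧ Sat s Ω ∧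
      (∀ x ∈ Ω, ENNReal.ofReal α * volume (dyadicCubeOf n (s x) x) ≤ ∫⁻ y in dyadicCubeOf n (s x) x, H y) ∧
      (∀ x ∈ Ω, ∫⁻ y in dyadicCubeOf n (s x) x, H y ≤ ENNReal.ofReal (2 ^ n * α) * volume (dyadicCubeOf n (s x) x)) ∧
      (∀ x ∉ Ω, ∀ j, ∫⁻ y in dyadicCubeOf n j x, H y ≤
      ENNReal.ofReal α * volume (dyadicCubeOf n j x)) := by
  classical
  let bad : ℤ → EE n → Prop := fun j x =>
    ENNReal.ofReal α * volume (dyadicCubeOf n j x) < ∫⁻ y in dyadicCubeOf n j x, H y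
  have bad_const : ∀ j x y, y ∈ dyadicCubeOf n j x → (bad j y ↔ bad j x) := by
    intro j x y hy
    simp only [bad, cube_eq hy]
  have bad_meas : ∀ j, MeasurableSet {x | bad j x} := fun j =>
    measurableSet_setOfPred.2 (meas_of_const j (bad j) fun x y hy => propext (bad_const j x y hy))
  have bad_bdd : ∃ b : ℤ, ∀ x j, bad j x → j ≤ b := by
    obtain ⟨b, hb⟩ := pow_unbounded_of_one_lt ((∫⁻ x, H x).toReal / α) (one_lt_two (α := ℝ))
    refine ⟨b, fun x j hj => ?_⟩
    by_contra! hlt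
    have h1 : ENNReal.ofReal α * volume (dyadicCubeOf n j x) < ∫⁻ y, H y :=
      lt_of_lt_of_le hj (setLIntegral_le_lintegral _ _)
    rw [cube_vol, ← ENNReal.ofReal_mul hα.le, ENNReal.ofReal_lt_iff_lt_toReal (by positivity) hfin.ne] at h1
    rw [div_lt_iff₀ hα] at hb
    have h2 : (2:ℝ) ^ b ≤ (2:ℝ) ^ j := by
      rw [← zpow_natCast]; exact zpow_le_zpow_right₀ (by norm_num) hlt.le
    have h3 : (2:ℝ) ^ j ≤ ((2:ℝ) ^ j) ^ n :=
      le_self_pow₀ (le_trans (one_le_pow₀ (by norm_num)) h2) (by omega)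
    nlinarith
  have hex : ∀ x, ∃ j : ℤ, (∃ i, bad i x) → (bad j x ∧ ∀ i, bad i x → i ≤ j) := by
    intro x
    by_cases hx : ∃ i, bad i x
    · obtain ⟨b, hb⟩ := bad_bdd
      obtain ⟨j, h1, h2⟩ := Int.exists_greatest_of_bdd ⟨b, hb x⟩ hx
      exact ⟨j, fun _ => ⟨h1, h2⟩⟩
    · exact ⟨0, fun h => absurd h hx⟩
  choose s0 hs0 using hex
  let Ω : Set (EE n) := {x | ∃ i, bad i x}
  let s : EE n → ℤ := fun x => if x ∈ Ω then s0 x else 0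
  have hsΩ : ∀ x ∈ Ω, bad (s x) x ∧ ∀ i, bad i x → i ≤ s x := by
    intro x hx
    simp only [s, if_pos hx]
    exact hs0 x hx
  have Ωm : MeasurableSet Ω := by
    have : Ω = ⋃ i, {x | bad i x} := by ext x; simp [Ω]
    rw [this]
    exact MeasurableSet.iUnion bad_meas
  refine ⟨Ω, s, ?_, ⟨Ωm, ?_⟩, fun x hx => (hsΩ x hx).1.le, ?_, ?_⟩
  · refine measurable_to_countable' fun j => ?_
    have : s ⁻¹' {j} = ({x | bad j x} ∩ ⋂ i : ℤ, {x | bad i x → i ≤ j}) ∪ {x | x ∉ Ω ∧ j = 0} := by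
      ext x
      simp only [Set.mem_preimage, Set.mem_singleton_iff, Set.mem_union, Set.mem_inter_iff, Set.mem_iInter,
        Set.mem_ofPred_eq]
      constructor
      · rintro rfl
        by_cases hx : x ∈ Ω
        · exact Or.inl (hsΩ x hx)
        · right; exact ⟨hx, by simp [s, hx]⟩
      · rintro (⟨h1, h2⟩ | ⟨h1, rfl⟩)
        · have hx : x ∈ Ω := ⟨j, h1⟩
          exact le_antisymm (h2 _ (hsΩ x hx).1) ((hsΩ x hx).2 _ h1)
        · simp [s, h1]
    rw [this]
    refine ((bad_meas j).inter (MeasurableSet.iInter fun i => ?_)).union ?_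
    · by_cases hij : i ≤ j
      · simp [hij]
      · have : {x | bad i x → i ≤ j} = {x | bad i x}ᶜ := by ext x; simp [hij]
        rw [this]; exact (bad_meas i).compl
    · by_cases hj : j = 0
      · have : {x | x ∉ Ω ∧ j = 0} = Ωᶜ := by ext x; simp [hj]
        rw [this]; exact Ωm.compl
      · simp [hj]
  · intro x hx y hy
    have hyΩ : y ∈ Ω := ⟨s x, (bad_const _ _ _ hy).2 (hsΩ x hx).1⟩
    refine ⟨hyΩ, ?_⟩
    have h1 : s x ≤ s y := (hsΩ y hyΩ).2 _ ((bad_const _ _ _ hy).2 (hsΩ x hx).1)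
    exact le_antisymm ((hsΩ x hx).2 _ ((bad_const _ _ _ (cube_mono h1 x hy |> fun h => by
      rw [mem_cube_iff_lab] at h ⊢; exact h)).1 (hsΩ y hyΩ).1)) h1
  · intro x hx
    have h1 : ¬ bad (s x + 1) x := fun h => by
      have := (hsΩ x hx).2 _ h
      omega
    simp only [bad, not_lt] at h1
    rw [cube_vol_succ] at h1
    refine (lintegral_mono_set (cube_sub_succ _ _)).trans (h1.trans (le_of_eq ?_))
    rw [ENNReal.ofReal_mul (by positivity), ENNReal.ofReal_pow (by norm_num)]
    simp
    ring
  · intro x hx j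
    by_contra! h
    exact hx ⟨j, h⟩

lemma minkowski {n : ℕ} {h : ℕ → EE n → ℝ} {H : EE n → ℝ≥0∞} (A : Set (EE n)) (N : ℕ)
    (hi : ∀ k, Integrable (h k))
    (hH : ∀ x, ∑ k ∈ Finset.range N, ENNReal.ofReal (h k x ^ 2) ≤ H x ^ 2) :
    ∑ k ∈ Finset.range N, ENNReal.ofReal ((∫ y in A, h k y) ^ 2) ≤ (∫⁻ y in A, H y) ^ 2 := by
  set a : ℕ → ℝ := fun k => ∫ y in A, h k y with ha
  rw [← ENNReal.ofReal_sum_of_nonneg fun k _ => sq_nonneg _]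
  change ENNReal.ofReal (∑ k ∈ Finset.range N, a k ^ 2) ≤ _
  set S := ∑ k ∈ Finset.range N, a k ^ 2 with hS
  have hS0 : 0 ≤ S := Finset.sum_nonneg fun k _ => sq_nonneg _
  have e1 : S = ∫ y in A, ∑ k ∈ Finset.range N, a k * h k y := by
    rw [integral_finsetSum _ fun k _ => (hi k).integrableOn.const_mul _]
    simp only [integral_const_mul, hS, ha, sq]
  have pt : ∀ y, ‖∑ k ∈ Finset.range N, a k * h k y‖ₑ ≤ ENNReal.ofReal (√S) * H y := by
    intro y
    have cs := Finset.sum_mul_sq_le_sq_mul_sq (Finset.range N) a (fun k => h k y)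
    have h1 := Real.abs_le_sqrt cs
    rw [Real.sqrt_mul hS0] at h1
    rw [Real.enorm_eq_ofReal_abs]
    refine (ENNReal.ofReal_le_ofReal h1).trans ?_
    rw [ENNReal.ofReal_mul (Real.sqrt_nonneg _)]
    gcongr
    have h2 := hH y
    rw [← ENNReal.ofReal_sum_of_nonneg fun k _ => sq_nonneg _] at h2
    rw [← Real.sq_sqrt (Finset.sum_nonneg fun k _ => sq_nonneg (h k y)), ENNReal.ofReal_pow (Real.sqrt_nonneg _)] at h2
    exact (ENNReal.pow_right_strictMono two_ne_zero).le_iff_le.1 h2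
  have e2 : ENNReal.ofReal S ≤ ENNReal.ofReal (√S) * ∫⁻ y in A, H y := by
    calc ENNReal.ofReal S = ‖∫ y in A, ∑ k ∈ Finset.range N, a k * h k y‖ₑ := by
          rw [← e1, Real.enorm_of_nonneg hS0]
      _ ≤ ∫⁻ y in A, ‖∑ k ∈ Finset.range N, a k * h k y‖ₑ := enorm_integral_le_lintegral_enorm _
      _ ≤ ∫⁻ y in A, ENNReal.ofReal (√S) * H y := lintegral_mono pt
      _ = _ := lintegral_const_mul' _ _ ENNReal.ofReal_ne_top
  rcases hS0.eq_or_lt with h0 | h0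
  · rw [← h0]; simp
  · have h3 : ENNReal.ofReal (√S) ≠ 0 := by simpa using h0
    have e3 : ENNReal.ofReal S = ENNReal.ofReal (√S) * ENNReal.ofReal (√S) := by
      rw [← ENNReal.ofReal_mul (Real.sqrt_nonneg _), Real.mul_self_sqrt hS0]
    rw [e3] at e2
    have e4 := (ENNReal.mul_le_mul_iff_right h3 ENNReal.ofReal_ne_top).1 e2
    rw [e3, ← sq]
    gcongr


lemma finite_bound {n : ℕ} (hn : 1 ≤ n) {t : ℕ → EE n → ℤ} (ht : ∀ k, IsDyadicStopping n (t k))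
    (hd : ∀ k x, t (k + 1) x ≤ t k x) {h : ℕ → EE n → ℝ} (hm : ∀ k, Measurable (h k))
    {H : EE n → ℝ≥0∞} (hHm : Measurable H) (hfin : ∫⁻ x, H x < ⊤)
    (hH : ∀ N x, ∑ k ∈ Finset.range N, ENNReal.ofReal (h k x ^ 2) ≤ H x ^ 2)
    (hk : ∀ k x, ‖h k x‖ₑ ≤ H x) {α : ℝ} (hα : 0 < α) (N : ℕ) :
    ENNReal.ofReal α * volume {x | α < |∑ k ∈ Finset.range N,
      (dyadicAvg n (t (k + 1) x) (h k) x - dyadicAvg n (t k x) (h k) x)|} ≤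
    ENNReal.ofReal (1 + 2 ^ n) * ∫⁻ x, H x := by
  classical
  obtain ⟨Ω, s, hs, hΩ, hlow, hup, hgood⟩ := cz_exists hn hfin hα
  have hi : ∀ k, Integrable (h k) := fun k =>
    ⟨(hm k).aestronglyMeasurable, lt_of_le_of_lt (lintegral_mono (hk k)) hfin⟩
  let g : ℕ → EE n → ℝ := fun k x => if x ∈ Ω then dyadicAvg n (s x) (h k) x else h k x
  have hg : ∀ k, Measurable (g k) := fun k => Measurable.ite hΩ.1 (avg_meas s hs (h k)) (hm k)
  have hgΩ : ∀ k, ∀ x ∈ Ω, g k x = dyadicAvg n (s x) (h k) x := fun k x hx => if_pos hx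
  have hgΩ' : ∀ k, ∀ x ∉ Ω, g k x = h k x := fun k x hx => if_neg hx
  have hoff := le_of_not_bad hHm hfin hα
  have h1n : α ≤ 2 ^ n * α := by
    have : (1:ℝ) ≤ 2 ^ n := one_le_pow₀ (by norm_num)
    nlinarith
  -- volumes
  have hvolΩ : ENNReal.ofReal α * volume Ω ≤ ∫⁻ x, H x := by
    rw [← setLIntegral_const]
    refine le_trans (fiber_le hs hΩ fun x hx => ?_) (setLIntegral_le_lintegral Ω H)
    rw [setLIntegral_const]
    exact hlow x hx
  -- bound
  have hB : ∀ k, ∀ᵐ x, |g k x| ≤ 2 ^ n * α := by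
    intro k
    filter_upwards [hoff] with x hx
    rw [← ENNReal.ofReal_le_ofReal_iff (by positivity), ← Real.enorm_eq_ofReal_abs]
    by_cases hxΩ : x ∈ Ω
    · rw [hgΩ k x hxΩ]
      have h1 := avg_abs_le (s x) (h k) x
      rw [setLIntegral_congr_fun (cube_meas (s x) x) (g := fun _ => ‖dyadicAvg n (s x) (h k) x‖ₑ)
        (fun y hy => by simp only [avg_const (h k) hy]), setLIntegral_const] at h1
      have h2 := h1.trans ((lintegral_mono (hk k)).trans (hup x hxΩ))
      exact (ENNReal.mul_le_mul_iff_left (cube_vol_ne_zero _ _) (cube_vol_ne_top _ _)).1 h2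
    · rw [hgΩ' k x hxΩ]
      exact (hk k x).trans ((hx (hgood x hxΩ)).trans (ENNReal.ofReal_le_ofReal h1n))
  -- energy
  have hE : ∫⁻ x, ∑ k ∈ Finset.range N, ENNReal.ofReal (g k x ^ 2) ≤
      ENNReal.ofReal (2 ^ n * α) * ∫⁻ x, H x := by
    rw [← lintegral_const_mul' _ _ ENNReal.ofReal_ne_top,
      ← lintegral_add_compl _ hΩ.1, ← lintegral_add_compl (fun x => _ * _) hΩ.1]
    refine add_le_add (fiber_le hs hΩ fun x hx => ?_) ?_
    · set Q := dyadicCubeOf n (s x) x with hQ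
      rw [setLIntegral_congr_fun (cube_meas (s x) x)
        (g := fun _ => ∑ k ∈ Finset.range N, ENNReal.ofReal (dyadicAvg n (s x) (h k) x ^ 2))
        (fun y hy => by
          obtain ⟨h1, h2⟩ := hΩ.2 x hx y hy
          simp only [hgΩ _ y h1, h2, avg_const _ hy]), setLIntegral_const,
        lintegral_const_mul' _ _ ENNReal.ofReal_ne_top]
      have hv := cube_vol_ne_top (s x) x
      have hv0 := cube_vol_ne_zero (s x) x
      refine (ENNReal.mul_le_mul_iff_right hv0 hv).1 ?_
      have mk := minkowski Q N hi (hH N)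
      have e : ∀ k, ENNReal.ofReal ((∫ y in Q, h k y) ^ 2) =
          volume Q ^ 2 * ENNReal.ofReal (dyadicAvg n (s x) (h k) x ^ 2) := by
        intro k
        rw [← avg_eq, mul_pow, ENNReal.ofReal_mul (by positivity), ENNReal.ofReal_pow measureReal_nonneg,
          measureReal_def, ENNReal.ofReal_toReal hv]
      simp only [e] at mk
      rw [← Finset.mul_sum] at mk
      calc _ = volume Q ^ 2 * ∑ k ∈ Finset.range N, ENNReal.ofReal (dyadicAvg n (s x) (h k) x ^ 2) := by
            rw [← hQ]; ring
        _ ≤ (∫⁻ y in Q, H y) ^ 2 := mk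
        _ ≤ (ENNReal.ofReal (2 ^ n * α) * volume Q) * ∫⁻ y in Q, H y := by
            rw [sq]; gcongr; exact hup x hx
        _ = _ := by ring
    · refine setLIntegral_mono_ae (hHm.const_mul _).aemeasurable ?_
      filter_upwards [hoff] with x hx hxΩ
      simp only [hgΩ' _ x hxΩ]
      refine (hH N x).trans ?_
      rw [sq]
      gcongr
      exact (hx (hgood x hxΩ)).trans (ENNReal.ofReal_le_ofReal h1n)
  -- off Ω the averages agree
  have havg : ∀ k j, ∀ x ∉ Ω, dyadicAvg n j (h k) x = dyadicAvg n j (g k) x := by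
    intro k j x hx
    have hA : Sat s (dyadicCubeOf n j x ∩ Ω) := by
      refine ⟨(cube_meas j x).inter hΩ.1, fun y hy z hz => ?_⟩
      obtain ⟨h1, h2⟩ := hΩ.2 y hy.2 z hz
      refine ⟨⟨?_, h1⟩, h2⟩
      have hlt : s y ≤ j := by
        by_contra! hlt
        have hxy : x ∈ dyadicCubeOf n j y := by rw [cube_eq hy.1]; exact self_mem j x
        exact hx (hΩ.2 y hy.2 x (cube_mono hlt.le y hxy)).1
      rw [← cube_eq hy.1]
      exact cube_mono hlt y hz
    obtain ⟨p1, p2⟩ := Es_int hs hA (f := h k) (hi k).integrableOn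
    have q1 : IntegrableOn (g k) (dyadicCubeOf n j x ∩ Ω) :=
      p1.congr_fun (fun y hy => (hgΩ k y hy.2).symm) hA.1
    have hD := (cube_meas j x).diff hΩ.1
    have q2 : IntegrableOn (g k) (dyadicCubeOf n j x \ Ω) :=
      (hi k).integrableOn.congr_fun (fun y hy => (hgΩ' k y hy.2).symm) hD
    have q : IntegrableOn (g k) (dyadicCubeOf n j x) := by
      rw [← Set.inter_union_sdiff (dyadicCubeOf n j x) Ω]; exact q1.union q2
    unfold dyadicAvg
    rw [setAverage_eq, setAverage_eq, ← integral_inter_add_sdiff hΩ.1 (hi k).integrableOn,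
      ← integral_inter_add_sdiff hΩ.1 q, ← p2]
    congr 2
    · exact setIntegral_congr_fun hA.1 fun y hy => (hgΩ k y hy.2).symm
    · exact setIntegral_congr_fun hD fun y hy => (hgΩ' k y hy.2).symm
  have hL2 := (L2_bound ht hd hg hB N).trans hE
  set P : EE n → ℝ := fun x => ∑ k ∈ Finset.range N,
      (dyadicAvg n (t (k + 1) x) (g k) x - dyadicAvg n (t k x) (g k) x) with hP
  have hPm : Measurable P := Finset.measurable_fun_sum _ fun k _ =>
    (avg_meas _ (ht (k+1)).1 _).sub (avg_meas _ (ht k).1 _)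
  have hsub : {x | α < |∑ k ∈ Finset.range N,
      (dyadicAvg n (t (k + 1) x) (h k) x - dyadicAvg n (t k x) (h k) x)|} ⊆
      Ω ∪ {x | ENNReal.ofReal (α ^ 2) ≤ ENNReal.ofReal (P x ^ 2)} := by
    intro x hx
    by_cases hxΩ : x ∈ Ω
    · exact Or.inl hxΩ
    · right
      simp only [Set.mem_ofPred_eq] at hx ⊢
      simp only [fun k j => havg k j x hxΩ] at hx
      apply ENNReal.ofReal_le_ofReal
      rw [← sq_abs (P x)]
      gcongr
      
  have hcheb := mul_meas_ge_le_lintegral₀ (μ := volume) (f := fun x => ENNReal.ofReal (P x ^ 2))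
    (hPm.pow_const 2).ennreal_ofReal.aemeasurable (ENNReal.ofReal (α ^ 2))
  have hch2 := hcheb.trans hL2
  have hch3 : ENNReal.ofReal α * volume {x | ENNReal.ofReal (α ^ 2) ≤ ENNReal.ofReal (P x ^ 2)} ≤
      ENNReal.ofReal (2 ^ n) * ∫⁻ x, H x := by
    have h0 : ENNReal.ofReal α ≠ 0 := by simpa using hα
    refine (ENNReal.mul_le_mul_iff_right h0 ENNReal.ofReal_ne_top).1 ?_
    rw [ENNReal.ofReal_pow hα.le, sq] at hch2
    rw [ENNReal.ofReal_mul (by positivity)] at hch2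
    rw [← mul_assoc, ← mul_assoc, mul_comm (ENNReal.ofReal α) (ENNReal.ofReal (2 ^ n))]
    rw [ENNReal.ofReal_pow hα.le, sq]
    exact hch2
  calc _ ≤ ENNReal.ofReal α * (volume Ω + volume {x | ENNReal.ofReal (α ^ 2) ≤ ENNReal.ofReal (P x ^ 2)}) := by
        gcongr
        exact (measure_mono hsub).trans (measure_union_le _ _)
    _ ≤ (∫⁻ x, H x) + ENNReal.ofReal (2 ^ n) * ∫⁻ x, H x := by
        rw [mul_add]; exact add_le_add hvolΩ hch3
    _ = _ := by
        rw [ENNReal.ofReal_add (by norm_num) (by positivity), add_mul]; simp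

theorem stmt14 (n : ℕ) (hn : 1 ≤ n) :
    ∃ C : ℝ, 0 < C ∧
      ∀ t : ℕ → EuclideanSpace ℝ (Fin n) → ℤ,
        (∀ k, IsDyadicStopping n (t k)) →
        (∀ k x, t (k + 1) x ≤ t k x) →
      ∀ h : ℕ → EuclideanSpace ℝ (Fin n) → ℝ,
        (∀ k, Measurable (h k)) →
        (∫⁻ x, (∑' k : ℕ, ENNReal.ofReal ((h k x) ^ 2)) ^ ((1:ℝ)/2)) < ⊤ →
      ∀ α : ℝ, 0 < α →
      ENNReal.ofReal α *
          volume {x | α < |∑' k : ℕ,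
            (dyadicAvg n (t (k + 1) x) (h k) x - dyadicAvg n (t k x) (h k) x)|}
        ≤ ENNReal.ofReal C *
            ∫⁻ x, (∑' k : ℕ, ENNReal.ofReal ((h k x) ^ 2)) ^ ((1:ℝ)/2) := by
  refine ⟨1 + 2 ^ n, by positivity, ?_⟩
  intro t ht hd h hm hfin α hα
  set H : EE n → ℝ≥0∞ := fun x => (∑' k : ℕ, ENNReal.ofReal ((h k x) ^ 2)) ^ ((1:ℝ)/2) with hHdef
  have hHm : Measurable H :=
    (Measurable.tsum fun k => ((hm k).pow_const 2).ennreal_ofReal).pow_const _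
  have hsq : ∀ x, H x ^ 2 = ∑' k : ℕ, ENNReal.ofReal ((h k x) ^ 2) := by
    intro x
    rw [hHdef, ← ENNReal.rpow_natCast, ← ENNReal.rpow_mul]
    norm_num
  have hH : ∀ N x, ∑ k ∈ Finset.range N, ENNReal.ofReal (h k x ^ 2) ≤ H x ^ 2 := by
    intro N x
    rw [hsq]; exact ENNReal.sum_le_tsum _
  have hk : ∀ k x, ‖h k x‖ₑ ≤ H x := by
    intro k x
    refine (ENNReal.pow_right_strictMono two_ne_zero).le_iff_le.1 ?_
    rw [hsq, Real.enorm_eq_ofReal_abs, ← ENNReal.ofReal_pow (abs_nonneg _), sq_abs]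
    exact ENNReal.le_tsum (f := fun k => ENNReal.ofReal ((h k x) ^ 2)) k
  let U : ℕ → Set (EE n) := fun N => {x | α < |∑ k ∈ Finset.range N,
      (dyadicAvg n (t (k + 1) x) (h k) x - dyadicAvg n (t k x) (h k) x)|}
  have hU : ∀ N, ENNReal.ofReal α * volume (U N) ≤ ENNReal.ofReal (1 + 2 ^ n) * ∫⁻ x, H x := fun N =>
    finite_bound hn ht hd hm hHm hfin hH hk hα N
  have hsub : {x | α < |∑' k : ℕ,
      (dyadicAvg n (t (k + 1) x) (h k) x - dyadicAvg n (t k x) (h k) x)|} ⊆ ⋃ M, ⋂ N, U (M + N) := by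
    intro x hx
    simp only [Set.mem_ofPred_eq] at hx
    have hsum : Summable fun k : ℕ => (dyadicAvg n (t (k + 1) x) (h k) x - dyadicAvg n (t k x) (h k) x) := by
      by_contra hns
      rw [tsum_eq_zero_of_not_summable hns] at hx
      simp at hx
      linarith
    have ht := hsum.hasSum.tendsto_sum_nat.abs.eventually (lt_mem_nhds hx)
    obtain ⟨M, hM⟩ := Filter.eventually_atTop.1 ht
    simp only [Set.mem_iUnion, Set.mem_iInter]
    exact ⟨M, fun N => hM (M + N) (by omega)⟩
  have hmono : Monotone fun M => ⋂ N, U (M + N) := by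
    intro M M' hMM x hx
    simp only [Set.mem_iInter] at hx ⊢
    intro N
    have := hx (M' - M + N)
    rwa [← add_assoc, Nat.add_sub_cancel' hMM] at this
  refine (mul_le_mul_right (measure_mono hsub) _).trans ?_
  rw [hmono.measure_iUnion, ENNReal.mul_iSup]
  refine iSup_le fun M => ?_
  refine le_trans ?_ (hU M)
  gcongr
  exact Set.iInter_subset_of_subset 0 (by simp)
end
end

section
/- Let φ ∈ 𝒮(ℝ^n) and let b be a Lipschitz function on ℝ^n with ∇b ∈ L^∞(ℝ^n). Then for every 1 < p < ∞ and every sequence {f_k}_{k∈ℤ} of measurable functions, ‖(Σ_{k∈ℤ} |∇[b, Φ_k] f_k|²)^{1/2}‖_{L^p(ℝ^n)} ≤ C ‖∇b‖_{L^∞} ‖(Σ_{k∈ℤ} |f_k|²)^{1/2}‖_{L^p(ℝ^n)}. -/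
open MeasureTheory ENNReal NNReal
noncomputable section

/-- `Φ_k g = φ_k ∗ g` where `φ_k(x) = 2^{-kn} φ(2^{-k} x)`. -/
def schwartzConv (n : ℕ) (φ : SchwartzMap (EuclideanSpace ℝ (Fin n)) ℝ) (k : ℤ)
    (g : EuclideanSpace ℝ (Fin n) → ℝ) (x : EuclideanSpace ℝ (Fin n)) : ℝ :=
  ∫ y, (2:ℝ) ^ (-(k * (n:ℤ))) * φ ((2:ℝ) ^ (-k) • (x - y)) * g y

namespace CommPf

lemma scalar_layer (s : ℝ) (hs : 0 < s) (a : ℝ≥0∞) :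
    ENNReal.ofReal s * ∫⁻ t in Set.Ioi (0:ℝ),
      (if ENNReal.ofReal t < a then ENNReal.ofReal (t ^ (s-1)) else 0) = a ^ s := by
  have fin : ∀ a : ℝ≥0∞, a ≠ ∞ → ENNReal.ofReal s * ∫⁻ t in Set.Ioi (0:ℝ),
      (if ENNReal.ofReal t < a then ENNReal.ofReal (t ^ (s-1)) else 0) = a ^ s := by
    intro a ha
    have := lintegral_rpow_eq_lintegral_meas_lt_mul (Measure.dirac ())
      (f := fun _ => a.toReal) (Filter.Eventually.of_forall fun _ => ENNReal.toReal_nonneg)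
      aemeasurable_const hs
    simp only [lintegral_const, measure_univ, mul_one] at this
    rw [← ENNReal.ofReal_rpow_of_nonneg ENNReal.toReal_nonneg hs.le, ENNReal.ofReal_toReal ha]
      at this
    rw [this]
    congr 1
    refine setLIntegral_congr_fun measurableSet_Ioi fun t ht => ?_
    have h1 : (ENNReal.ofReal t < a) ↔ t < a.toReal :=
      ENNReal.ofReal_lt_iff_lt_toReal (le_of_lt ht) ha
    by_cases h : t < a.toReal
    · simp [h1, h]
    · simp [h1, h]
  by_cases ha : a = ∞
  · subst ha
    rw [ENNReal.top_rpow_of_pos hs]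
    refine ENNReal.eq_top_of_forall_nnreal_le fun r => ?_
    have h1 := fin ((r:ℝ≥0∞) ^ (1/s)) (ENNReal.rpow_ne_top_of_nonneg (by positivity) (by simp))
    rw [← ENNReal.rpow_mul, one_div, inv_mul_cancel₀ hs.ne', ENNReal.rpow_one] at h1
    rw [← h1]
    gcongr with t
    split_ifs with h2 h3
    · rfl
    · exact absurd (by simp) h3
    · simp
    · simp
  · exact fin a ha

variable {n : ℕ}

local notation "𝔼" n => EuclideanSpace ℝ (Fin n)

def cst (n : ℕ) (m : ℤ) : ℝ≥0∞ := ENNReal.ofReal ((2:ℝ) ^ (-(m * (n:ℤ))))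

def Eavg (n : ℕ) (m : ℤ) (w : (𝔼 n) → ℝ≥0∞) (x : 𝔼 n) : ℝ≥0∞ :=
  cst n m * ∫⁻ y in Metric.closedBall x ((2:ℝ)^m), w y

def HLM (n : ℕ) (w : (𝔼 n) → ℝ≥0∞) (x : 𝔼 n) : ℝ≥0∞ := ⨆ m : ℤ, Eavg n m w x

def vol1 (n : ℕ) : ℝ≥0∞ := volume (Metric.ball (0 : 𝔼 n) 1)

lemma vol1_ne_top : vol1 n ≠ ∞ := measure_ball_lt_top.ne
lemma vol1_pos : vol1 n ≠ 0 := (Metric.measure_ball_pos _ _ one_pos).ne'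

lemma cst_ne_zero (m : ℤ) : cst n m ≠ 0 := by
  unfold cst; simp; positivity
lemma cst_ne_top (m : ℤ) : cst n m ≠ ∞ := by unfold cst; simp

lemma vol_ball (x : 𝔼 n) (r : ℝ) (hr : 0 ≤ r) :
    volume (Metric.closedBall x r) = ENNReal.ofReal (r ^ n) * vol1 n := by
  rw [Measure.addHaar_closedBall _ _ hr]; simp [vol1]

lemma cst_mul_vol (x : 𝔼 n) (m : ℤ) :
    cst n m * volume (Metric.closedBall x ((2:ℝ)^m)) = vol1 n := by
  rw [vol_ball _ _ (by positivity), ← mul_assoc, cst, ← ENNReal.ofReal_mul (by positivity)]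
  have : (2:ℝ) ^ (-(m * (n:ℤ))) * ((2:ℝ)^m)^n = 1 := by
    rw [zpow_neg, zpow_mul, zpow_natCast]
    exact inv_mul_cancel₀ (by positivity)
  rw [this]; simp

lemma meas_Eavg (m : ℤ) {w : (𝔼 n) → ℝ≥0∞} (hw : Measurable w) : Measurable (Eavg n m w) := by
  unfold Eavg
  refine Measurable.const_mul ?_ _
  have : (fun x : 𝔼 n => ∫⁻ y in Metric.closedBall x ((2:ℝ)^m), w y) =
      fun x => ∫⁻ y, {z : (𝔼 n) × (𝔼 n) | dist z.2 z.1 ≤ (2:ℝ)^m}.indicator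
        (fun z => w z.2) (x, y) := by
    ext x
    rw [← lintegral_indicator Metric.isClosed_closedBall.measurableSet]
    rfl
  rw [this]
  refine Measurable.lintegral_prod_right' (f := {z : (𝔼 n) × (𝔼 n) | dist z.2 z.1 ≤ (2:ℝ)^m}.indicator
        (fun z => w z.2)) ?_
  refine Measurable.indicator (by fun_prop) ?_
  exact measurableSet_le (by fun_prop) (by fun_prop)

lemma meas_HLM {w : (𝔼 n) → ℝ≥0∞} (hw : Measurable w) : Measurable (HLM n w) :=
  Measurable.iSup fun m => meas_Eavg m hw

/-- weak type (1,1) -/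
lemma weak11 (w : (𝔼 n) → ℝ≥0∞) (t : ℝ≥0∞) :
    t * volume {x | t < HLM n w x} ≤ ENNReal.ofReal (5 ^ n) * vol1 n * ∫⁻ y, w y := by
  have key : ∀ N : ℕ, t * volume {x | ∃ m : ℤ, m ≤ N ∧ t < Eavg n m w x} ≤
      ENNReal.ofReal (5 ^ n) * vol1 n * ∫⁻ y, w y := by
    intro N
    set S := {x | ∃ m : ℤ, m ≤ N ∧ t < Eavg n m w x} with hS
    have hch : ∀ x : 𝔼 n, ∃ m : ℤ, x ∈ S → (m ≤ N ∧ t < Eavg n m w x) := by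
      intro x
      by_cases hx : x ∈ S
      · obtain ⟨m, hm⟩ := hx; exact ⟨m, fun _ => hm⟩
      · exact ⟨0, fun h => absurd h hx⟩
    choose m hm using hch
    obtain ⟨u, huS, hd, hcov⟩ := Vitali.exists_disjoint_subfamily_covering_enlargement_closedBall
      S (fun x => x) (fun x => (2:ℝ) ^ (m x)) ((2:ℝ)^(N:ℤ))
      (fun a ha => zpow_le_zpow_right₀ (by norm_num) (hm a ha).1) 5 (by norm_num)
    have hcount : u.Countable := hd.countable_of_nonempty_interior fun a ha => by
      refine ⟨a, ?_⟩
      exact Metric.ball_subset_interior_closedBall (Metric.mem_ball_self (by positivity))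
    have hsub : S ⊆ ⋃ a ∈ u, Metric.closedBall a (5 * (2:ℝ)^(m a)) := by
      intro x hx
      obtain ⟨b, hb, hxb⟩ := hcov x hx
      exact Set.mem_biUnion hb (hxb (Metric.mem_closedBall_self (by positivity)))
    calc t * volume S ≤ t * volume (⋃ a ∈ u, Metric.closedBall a (5 * (2:ℝ)^(m a))) := by
          gcongr
      _ ≤ t * ∑' a : u, volume (Metric.closedBall (a : 𝔼 n) (5 * (2:ℝ)^(m a))) := by
          gcongr; exact measure_biUnion_le _ hcount _
      _ = ∑' a : u, t * volume (Metric.closedBall (a : 𝔼 n) (5 * (2:ℝ)^(m a))) :=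
          ENNReal.tsum_mul_left.symm
      _ ≤ ∑' a : u, ENNReal.ofReal (5 ^ n) * vol1 n *
            ∫⁻ y in Metric.closedBall (a : 𝔼 n) ((2:ℝ)^(m a)), w y := by
          refine ENNReal.tsum_le_tsum fun a => ?_
          rw [vol_ball _ _ (by positivity), mul_pow, ENNReal.ofReal_mul (by positivity)]
          have h1 := (hm a (huS a.2)).2.le
          rw [Eavg] at h1
          have h2 : ENNReal.ofReal (((2:ℝ)^(m a))^n) * cst n (m a) = 1 := by
            rw [cst, ← ENNReal.ofReal_mul (by positivity), zpow_neg, zpow_mul, zpow_natCast,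
              mul_inv_cancel₀ (by positivity)]
            simp
          calc t * (ENNReal.ofReal (5 ^ n) * ENNReal.ofReal (((2:ℝ)^(m a))^n) * vol1 n)
              ≤ (cst n (m a) * ∫⁻ y in Metric.closedBall (a : 𝔼 n) ((2:ℝ)^(m a)), w y) *
                (ENNReal.ofReal (5 ^ n) * ENNReal.ofReal (((2:ℝ)^(m a))^n) * vol1 n) := by
                gcongr
            _ = (ENNReal.ofReal (((2:ℝ)^(m a))^n) * cst n (m a)) * (ENNReal.ofReal (5 ^ n) * vol1 n *
            ∫⁻ y in Metric.closedBall (a : 𝔼 n) ((2:ℝ)^(m a)), w y) := by ring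
            _ = _ := by rw [h2, one_mul]
      _ = ENNReal.ofReal (5 ^ n) * vol1 n * ∑' a : u,
            ∫⁻ y in Metric.closedBall (a : 𝔼 n) ((2:ℝ)^(m a)), w y := ENNReal.tsum_mul_left
      _ = ENNReal.ofReal (5 ^ n) * vol1 n *
            ∫⁻ y in ⋃ a ∈ u, Metric.closedBall (a : 𝔼 n) ((2:ℝ)^(m a)), w y := by
          rw [lintegral_biUnion hcount (fun a _ => Metric.isClosed_closedBall.measurableSet) hd]
      _ ≤ _ := by gcongr; exact Measure.restrict_le_self
  have hU : {x | t < HLM n w x} = ⋃ N : ℕ, {x | ∃ m : ℤ, m ≤ N ∧ t < Eavg n m w x} := by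
    ext x
    simp only [HLM, lt_iSup_iff, Set.mem_ofPred_eq, Set.mem_iUnion]
    constructor
    · rintro ⟨m, hm⟩; exact ⟨m.toNat, m, Int.self_le_toNat m, hm⟩
    · rintro ⟨N, m, _, hm⟩; exact ⟨m, hm⟩
  rw [hU, Monotone.measure_iUnion, ENNReal.mul_iSup]
  · exact iSup_le key
  · intro N M hNM x hx
    obtain ⟨m, hm, h⟩ := hx
    exact ⟨m, hm.trans (by exact_mod_cast hNM), h⟩

lemma HLM_const (c : ℝ≥0∞) (x : 𝔼 n) : HLM n (fun _ => c) x = vol1 n * c := by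
  unfold HLM Eavg
  simp only [lintegral_const, Measure.restrict_apply_univ]
  have : ∀ m : ℤ, cst n m * (c * volume (Metric.closedBall x ((2:ℝ)^m))) = vol1 n * c := by
    intro m
    rw [← cst_mul_vol x m]; ring
  simp [this]

lemma HLM_add_const {w : (𝔼 n) → ℝ≥0∞} (hw : Measurable w) (c : ℝ≥0∞) (x : 𝔼 n) :
    HLM n (fun y => w y + c) x ≤ HLM n w x + vol1 n * c := by
  unfold HLM
  refine iSup_le fun m => ?_
  rw [← HLM_const c x]
  unfold Eavg
  rw [lintegral_add_left hw, mul_add]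
  gcongr
  · exact le_iSup (fun m => Eavg n m w x) m
  · exact le_iSup (fun m => Eavg n m (fun _ => c) x) m

lemma HLM_mono {w w' : (𝔼 n) → ℝ≥0∞} (h : ∀ y, w y ≤ w' y) (x : 𝔼 n) : HLM n w x ≤ HLM n w' x := by
  unfold HLM Eavg
  gcongr with m y
  exact h y

lemma weak11' {w : (𝔼 n) → ℝ≥0∞} (hw : Measurable w) (t : ℝ≥0∞) :
    t * volume {x | 2 * vol1 n * t < HLM n w x} ≤ ENNReal.ofReal (5 ^ n) *
      ∫⁻ y, {y | t < w y}.indicator w y := by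
  by_cases ht : t = ∞
  · subst ht
    have : 2 * vol1 n * ∞ = ∞ := by
      rw [ENNReal.mul_top]; simp [vol1_pos]
    simp [this]
  have hms : MeasurableSet {y | t < w y} := measurableSet_lt measurable_const hw
  have h0 : ∀ x, HLM n w x ≤ HLM n ({y | t < w y}.indicator w) x + vol1 n * t := by
    intro x
    refine le_trans (HLM_mono (fun y => ?_) x) (HLM_add_const (hw.indicator hms) t x)
    by_cases h : t < w y
    · simp [Set.indicator, h]
    · simp only [Set.indicator, Set.mem_ofPred_eq, h, if_false, zero_add]; exact not_lt.1 h
  have h1 : {x | 2 * vol1 n * t < HLM n w x} ⊆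
      {x | vol1 n * t < HLM n ({y | t < w y}.indicator w) x} := by
    intro x hx
    have := lt_of_lt_of_le hx (h0 x)
    rw [mul_assoc, two_mul] at this
    exact lt_of_add_lt_add_right this
  have h2 := weak11 ({y | t < w y}.indicator w) (vol1 n * t)
  have h3 : vol1 n * (t * volume {x | 2 * vol1 n * t < HLM n w x}) ≤
      vol1 n * (ENNReal.ofReal (5 ^ n) * ∫⁻ y, {y | t < w y}.indicator w y) := by
    calc _ = vol1 n * t * volume {x | 2 * vol1 n * t < HLM n w x} := by ring
      _ ≤ _ := mul_le_mul_right (measure_mono h1) _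
      _ ≤ _ := h2
      _ = _ := by ring
  exact (ENNReal.mul_le_mul_iff_right vol1_pos vol1_ne_top).1 h3

lemma HLM_strong (q : ℝ) (hq : 1 < q) : ∃ C : ℝ≥0∞, C ≠ ∞ ∧ ∀ w : (𝔼 n) → ℝ≥0∞, Measurable w →
    ∫⁻ x, HLM n w x ^ q ≤ C * ∫⁻ x, w x ^ q := by
  set v := 2 * vol1 n with hv
  have hv0 : v ≠ 0 := by simp [hv, vol1_pos]
  have hvt : v ≠ ∞ := ENNReal.mul_ne_top (by simp) vol1_ne_top
  refine ⟨v ^ q * (ENNReal.ofReal q * (ENNReal.ofReal (5 ^ n) * (ENNReal.ofReal (q-1))⁻¹)), ?_, ?_⟩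
  · have : ENNReal.ofReal (q-1) ≠ 0 := by simp; linarith
    have h3 : v ^ q ≠ ∞ := ENNReal.rpow_ne_top_of_nonneg (by linarith) hvt
    finiteness
  intro w hw
  have hM := meas_HLM hw
  have e1 : ∀ x, HLM n w x ^ q = v ^ q * (HLM n w x / v) ^ q := by
    intro x
    rw [← ENNReal.mul_rpow_of_nonneg _ _ (by linarith), ENNReal.mul_div_cancel hv0 hvt]
  have e2 : ∀ x (t : ℝ), (ENNReal.ofReal t < HLM n w x / v) ↔ v * ENNReal.ofReal t < HLM n w x := by
    intro x t
    rw [ENNReal.lt_div_iff_mul_lt (Or.inl hv0) (Or.inl hvt), mul_comm]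
  calc ∫⁻ x, HLM n w x ^ q = v ^ q * ∫⁻ x, (HLM n w x / v) ^ q := by
        simp_rw [e1]; rw [lintegral_const_mul _ (by fun_prop)]
    _ = v ^ q * (ENNReal.ofReal q * ∫⁻ x, ∫⁻ t in Set.Ioi (0:ℝ),
          (if ENNReal.ofReal t < HLM n w x / v then ENNReal.ofReal (t ^ (q-1)) else 0)) := by
        rw [← lintegral_const_mul' (ENNReal.ofReal q) _ (by simp)]
        simp_rw [scalar_layer q (by linarith)]
    _ = v ^ q * (ENNReal.ofReal q * ∫⁻ t in Set.Ioi (0:ℝ), ∫⁻ x,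
          (if ENNReal.ofReal t < HLM n w x / v then ENNReal.ofReal (t ^ (q-1)) else 0)) := by
        rw [lintegral_lintegral_swap]
        refine Measurable.aemeasurable ?_
        refine Measurable.ite (measurableSet_lt (by fun_prop) (by fun_prop)) (by fun_prop) (by fun_prop)
    _ ≤ v ^ q * (ENNReal.ofReal q * ∫⁻ t in Set.Ioi (0:ℝ), ENNReal.ofReal (5 ^ n) * ∫⁻ x,
          (if ENNReal.ofReal t < w x then ENNReal.ofReal (t ^ ((q-1)-1)) * w x else 0)) := by
        refine mul_le_mul_right (mul_le_mul_right (setLIntegral_mono' measurableSet_Ioi fun t ht => ?_) _) _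
        have ht : 0 < t := ht
        have h1 := weak11' hw (ENNReal.ofReal t)
        have e3 : ∀ x, (if ENNReal.ofReal t < HLM n w x / v then ENNReal.ofReal (t ^ (q-1)) else 0)
            = {x | v * ENNReal.ofReal t < HLM n w x}.indicator (fun _ => ENNReal.ofReal (t ^ (q-1))) x := by
          intro x; simp only [Set.indicator, Set.mem_ofPred_eq, e2]
        have e4 : ∀ x, (if ENNReal.ofReal t < w x then ENNReal.ofReal (t ^ ((q-1)-1)) * w x else 0)
            = ENNReal.ofReal (t ^ ((q-1)-1)) * {x | ENNReal.ofReal t < w x}.indicator w x := by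
          intro x; simp only [Set.indicator, Set.mem_ofPred_eq]; split_ifs <;> simp
        simp_rw [e3, e4]
        rw [lintegral_indicator_const (measurableSet_lt (by fun_prop) hM),
          lintegral_const_mul' _ _ (by simp)]
        have e5 : ENNReal.ofReal (t ^ (q-1)) = ENNReal.ofReal (t ^ ((q-1)-1)) * ENNReal.ofReal t := by
          rw [← ENNReal.ofReal_mul (by positivity), Real.rpow_sub_one ht.ne' (q-1),
            div_mul_cancel₀ _ ht.ne']
        rw [e5, mul_assoc, mul_left_comm (ENNReal.ofReal (5^n))]
        gcongr
    _ = v ^ q * (ENNReal.ofReal q * (ENNReal.ofReal (5 ^ n) * ∫⁻ x, ∫⁻ t in Set.Ioi (0:ℝ),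
          (if ENNReal.ofReal t < w x then ENNReal.ofReal (t ^ ((q-1)-1)) * w x else 0))) := by
        rw [lintegral_const_mul' _ _ (by simp), lintegral_lintegral_swap]
        refine Measurable.aemeasurable ?_
        refine Measurable.ite (measurableSet_lt (by fun_prop) (by fun_prop)) (by fun_prop) (by fun_prop)
    _ = v ^ q * (ENNReal.ofReal q * (ENNReal.ofReal (5 ^ n) * ∫⁻ x,
          (ENNReal.ofReal (q-1))⁻¹ * w x ^ q)) := by
        congr 3
        refine lintegral_congr fun x => ?_
        have h := scalar_layer (q-1) (by linarith) (w x)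
        have h6 : ENNReal.ofReal (q-1) ≠ 0 := by simp; linarith
        have h7 : w x ^ q = w x ^ (q-1) * w x := by
          conv_lhs => rw [show q = (q-1) + 1 by ring]
          rw [ENNReal.rpow_add_of_nonneg _ _ (by linarith) (by norm_num), ENNReal.rpow_one]
        rw [h7, ← h, ← mul_assoc, ← mul_assoc, ENNReal.inv_mul_cancel h6 (by simp), one_mul,
          ← lintegral_mul_const]
        · refine lintegral_congr fun t => ?_
          split_ifs <;> simp
        · refine Measurable.ite (measurableSet_lt (by fun_prop) (by fun_prop)) (by fun_prop) (by fun_prop)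
    _ = _ := by
        rw [lintegral_const_mul _ (by fun_prop)]; ring

end CommPf

namespace CommPf
variable {n : ℕ}
local notation "𝔼" n => EuclideanSpace ℝ (Fin n)

def Ker (n : ℕ) (k : ℤ) (u : 𝔼 n) : ℝ≥0∞ :=
  ∑' j : ℕ, (2⁻¹ : ℝ≥0∞) ^ j * (cst n (k + j) *
    (Metric.closedBall (0 : 𝔼 n) ((2:ℝ) ^ (k + j))).indicator 1 u)

def Aop (n : ℕ) (k : ℤ) (w : (𝔼 n) → ℝ≥0∞) (x : 𝔼 n) : ℝ≥0∞ :=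
  ∫⁻ y, Ker n k (x - y) * w y

lemma meas_ind (m : ℤ) : Measurable
    ((Metric.closedBall (0 : 𝔼 n) ((2:ℝ) ^ m)).indicator (1 : (𝔼 n) → ℝ≥0∞)) :=
  measurable_one.indicator Metric.isClosed_closedBall.measurableSet

@[fun_prop]
lemma meas_Ker (k : ℤ) : Measurable (Ker n k) := by
  unfold Ker
  refine Measurable.tsum fun j => ?_
  exact ((meas_ind _).const_mul _).const_mul _

@[fun_prop]
lemma meas_Aop (k : ℤ) {w : (𝔼 n) → ℝ≥0∞} (hw : Measurable w) : Measurable (Aop n k w) := by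
  unfold Aop
  refine Measurable.lintegral_prod_right' (f := fun z : (𝔼 n) × (𝔼 n) => Ker n k (z.1 - z.2) * w z.2) ?_
  have := meas_Ker (n := n) k
  fun_prop

lemma Ker_neg (k : ℤ) (u : 𝔼 n) : Ker n k (-u) = Ker n k u := by
  unfold Ker
  simp [Set.indicator]

lemma Aop_eq (k : ℤ) {w : (𝔼 n) → ℝ≥0∞} (hw : Measurable w) (x : 𝔼 n) :
    Aop n k w x = ∑' j : ℕ, (2⁻¹ : ℝ≥0∞) ^ j * Eavg n (k + j) w x := by
  unfold Aop Ker
  simp_rw [← ENNReal.tsum_mul_right]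
  have hm : ∀ m : ℤ, Measurable fun y : 𝔼 n =>
      (Metric.closedBall (0 : 𝔼 n) ((2:ℝ) ^ m)).indicator (1 : (𝔼 n) → ℝ≥0∞) (x - y) :=
    fun m => (meas_ind m).comp (measurable_const.sub measurable_id)
  rw [lintegral_tsum]
  · congr 1
    ext j
    unfold Eavg
    simp_rw [mul_assoc]
    rw [lintegral_const_mul' _ _ (by simp), lintegral_const_mul' _ _ (cst_ne_top _),
      ← lintegral_indicator Metric.isClosed_closedBall.measurableSet]
    congr 3
    ext y
    simp only [Set.indicator, Metric.mem_closedBall, dist_zero_right, dist_comm y x, dist_eq_norm x y]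
    split_ifs <;> simp
  · intro j
    have := hm (k+j)
    fun_prop

lemma Aop_le (k : ℤ) {w : (𝔼 n) → ℝ≥0∞} (hw : Measurable w) (x : 𝔼 n) :
    Aop n k w x ≤ 2 * HLM n w x := by
  rw [Aop_eq k hw x]
  calc ∑' j : ℕ, (2⁻¹ : ℝ≥0∞) ^ j * Eavg n (k + j) w x
      ≤ ∑' j : ℕ, (2⁻¹ : ℝ≥0∞) ^ j * HLM n w x := by
        gcongr with j; exact le_iSup (fun m => Eavg n m w x) (k + j)
    _ = 2 * HLM n w x := by
        rw [ENNReal.tsum_mul_right, ENNReal.tsum_geometric, ENNReal.one_sub_inv_two, inv_inv]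

lemma Aop_one_le (k : ℤ) (x : 𝔼 n) : Aop n k (fun _ => 1) x ≤ 2 * vol1 n := by
  have := Aop_le k (n := n) (measurable_const (a := (1:ℝ≥0∞))) x
  rwa [HLM_const, mul_one] at this

lemma Aop_dual (k : ℤ) {w g : (𝔼 n) → ℝ≥0∞} (hw : Measurable w) (hg : Measurable g) :
    ∫⁻ x, Aop n k w x * g x = ∫⁻ x, w x * Aop n k g x := by
  have hK := meas_Ker (n := n) k
  unfold Aop
  calc ∫⁻ x, (∫⁻ y, Ker n k (x - y) * w y) * g x
      = ∫⁻ x, ∫⁻ y, Ker n k (x - y) * w y * g x := by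
        refine lintegral_congr fun x => ?_
        rw [lintegral_mul_const]; fun_prop
    _ = ∫⁻ y, ∫⁻ x, Ker n k (x - y) * w y * g x := by
        rw [lintegral_lintegral_swap]
        refine Measurable.aemeasurable ?_
        fun_prop
    _ = _ := by
        refine lintegral_congr fun x => ?_
        rw [← lintegral_const_mul _ (by fun_prop)]
        refine lintegral_congr fun y => ?_
        rw [← Ker_neg, neg_sub]; ring

lemma Aop_CS (k : ℤ) {f g : (𝔼 n) → ℝ≥0∞} (hf : Measurable f) (hg : Measurable g) (x : 𝔼 n) :
    Aop n k (fun y => f y * g y) x ^ 2 ≤ Aop n k (fun y => f y ^ 2) x * Aop n k (fun y => g y ^ 2) x := by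
  have hK := meas_Ker (n := n) k
  have h := lintegral_mul_norm_pow_le (μ := (volume : Measure (𝔼 n)))
    (f := fun y => Ker n k (x - y) * f y ^ 2) (g := fun y => Ker n k (x - y) * g y ^ 2)
    (by fun_prop) (by fun_prop) (p := 1/2) (q := 1/2) (by norm_num) (by norm_num) (by norm_num)
  have sq : ∀ a : ℝ≥0∞, (a ^ 2) ^ (1/2 : ℝ) = a := by
    intro a
    rw [← ENNReal.rpow_natCast, ← ENNReal.rpow_mul]; norm_num
  have sq' : ∀ a : ℝ≥0∞, (a ^ (1/2 : ℝ)) ^ 2 = a := by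
    intro a
    rw [← ENNReal.rpow_natCast, ← ENNReal.rpow_mul]; norm_num
  have e : ∀ y, (Ker n k (x - y) * f y ^ 2) ^ (1/2 : ℝ) * (Ker n k (x - y) * g y ^ 2) ^ (1/2 : ℝ) =
      Ker n k (x - y) * (f y * g y) := by
    intro y
    rw [ENNReal.mul_rpow_of_nonneg _ _ (by norm_num), ENNReal.mul_rpow_of_nonneg _ _ (by norm_num),
      sq, sq]
    conv_rhs => rw [← sq' (Ker n k (x - y))]
    ring
  simp_rw [e] at h
  unfold Aop
  calc _ ≤ _ := pow_le_pow_left' h 2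
    _ = _ := by rw [mul_pow, sq', sq']

lemma Aop_weight (k : ℤ) {f w : (𝔼 n) → ℝ≥0∞} (hf : Measurable f) (hw : Measurable w) :
    ∫⁻ x, Aop n k f x ^ 2 * w x ≤ 2 * vol1 n * ∫⁻ x, f x ^ 2 * Aop n k w x := by
  rw [← Aop_dual k (by fun_prop) hw, ← lintegral_const_mul _ (by fun_prop)]
  refine lintegral_mono fun x => ?_
  have h := Aop_CS k hf (measurable_const (a := (1:ℝ≥0∞))) x
  simp only [mul_one, one_pow] at h
  calc Aop n k f x ^ 2 * w x ≤ (Aop n k (fun y => f y ^ 2) x * (2 * vol1 n)) * w x := by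
        gcongr
        exact h.trans (mul_le_mul_right (Aop_one_le k x) _)
    _ = _ := by ring

lemma dual_Lp {r r' : ℝ} (hr : r.HolderConjugate r') {G : (𝔼 n) → ℝ≥0∞} (hG : Measurable G)
    (B : ℝ≥0∞) (h : ∀ w : (𝔼 n) → ℝ≥0∞, Measurable w →
      ∫⁻ x, G x * w x ≤ B * (∫⁻ x, w x ^ r') ^ (1 / r')) :
    ∫⁻ x, G x ^ r ≤ B ^ r := by
  have hr0 := hr.pos
  have hr0' := hr.symm.pos
  have hr1 := hr.lt
  set GN : ℕ → (𝔼 n) → ℝ≥0∞ := fun N => (Metric.ball 0 N).indicator (fun x => min (G x) N) with hGN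
  have hGNm : ∀ N, Measurable (GN N) := fun N =>
    (hG.min measurable_const).indicator Metric.isOpen_ball.measurableSet
  have hle : ∀ N x, GN N x ≤ G x := by
    intro N x
    simp only [hGN, Set.indicator]
    split_ifs
    · exact min_le_left _ _
    · simp
  have key : ∀ N, ∫⁻ x, GN N x ^ r ≤ B ^ r := by
    intro N
    set I := ∫⁻ x, GN N x ^ r with hI
    have hIt : I ≠ ∞ := by
      have : I ≤ ∫⁻ x, (Metric.ball (0 : 𝔼 n) N).indicator (fun _ => (N : ℝ≥0∞) ^ r) x := by
        refine lintegral_mono fun x => ?_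
        simp only [hGN, Set.indicator]
        split_ifs
        · gcongr; exact min_le_right _ _
        · simp [hr0]
      rw [lintegral_indicator_const Metric.isOpen_ball.measurableSet] at this
      refine ne_top_of_le_ne_top (ENNReal.mul_ne_top ?_ measure_ball_lt_top.ne) this
      exact ENNReal.rpow_ne_top_of_nonneg hr0.le (by simp)
    by_cases hI0 : I = 0
    · simp [hI0]
    have h1 := h (fun x => GN N x ^ (r - 1)) ((hGNm N).pow_const _)
    have e1 : ∀ x, (GN N x ^ (r-1)) ^ r' = GN N x ^ r := by
      intro x
      rw [← ENNReal.rpow_mul, hr.sub_one_mul_conj]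
    simp_rw [e1] at h1
    have h2 : I ≤ B * I ^ (1/r') := by
      refine le_trans (lintegral_mono fun x => ?_) h1
      calc GN N x ^ r = GN N x * GN N x ^ (r-1) := by
            conv_lhs => rw [show r = 1 + (r-1) by ring]
            rw [ENNReal.rpow_add_of_nonneg _ _ (by norm_num) (by linarith), ENNReal.rpow_one]
        _ ≤ _ := by gcongr; exact hle N x
    have e2 : I = I ^ (1/r) * I ^ (1/r') := by
      rw [← ENNReal.rpow_add _ _ hI0 hIt]
      have := hr.inv_add_inv_eq_one
      rw [one_div, one_div, this, ENNReal.rpow_one]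
    have h3 : I ^ (1/r) ≤ B := by
      rw [e2] at h2
      rw [← e2] at h2
      have h4 : I ^ (1/r) * I ^ (1/r') ≤ B * I ^ (1/r') := by rw [← e2]; exact h2
      refine (ENNReal.mul_le_mul_iff_left ?_ ?_).1 h4
      · simp [hI0, hIt]
      · exact ENNReal.rpow_ne_top_of_nonneg (by positivity) hIt
    calc I = (I ^ (1/r)) ^ r := by
          rw [← ENNReal.rpow_mul, one_div, inv_mul_cancel₀ hr0.ne', ENNReal.rpow_one]
      _ ≤ _ := by gcongr
  have hmono : ∀ x, Monotone fun N => GN N x ^ r := by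
    intro x N M hNM
    simp only [hGN]
    gcongr
    refine (Set.indicator_le_indicator_of_subset (Metric.ball_subset_ball (show (N:ℝ) ≤ M by exact_mod_cast hNM))
      (fun _ => zero_le) x).trans ?_
    refine Set.indicator_le_indicator ?_
    gcongr
  have hlim : ∀ x, Filter.Tendsto (fun N => GN N x ^ r) Filter.atTop (nhds (G x ^ r)) := by
    intro x
    refine (ENNReal.continuous_rpow_const.tendsto (G x)).comp ?_
    have h1 : Filter.Tendsto (fun N : ℕ => min (G x) (N : ℝ≥0∞)) Filter.atTop (nhds (G x)) := by
      have := (tendsto_const_nhds (x := G x)).min ENNReal.tendsto_nat_nhds_top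
      simpa using this
    refine h1.congr' ?_
    obtain ⟨N0, hN0⟩ := exists_nat_gt ‖x‖
    filter_upwards [Filter.eventually_ge_atTop N0] with N hN
    have : x ∈ Metric.ball (0 : 𝔼 n) N := by
      simp only [Metric.mem_ball, dist_zero_right]
      exact hN0.trans_le (by exact_mod_cast hN)
    simp [hGN, Set.indicator_of_mem this]
  have := lintegral_tendsto_of_tendsto_of_monotone (μ := (volume : Measure (𝔼 n)))
    (fun N => ((hGNm N).pow_const r).aemeasurable)
    (Filter.Eventually.of_forall hmono) (Filter.Eventually.of_forall hlim)
  exact le_of_tendsto' this key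

lemma VV_gt (p : ℝ) (hp : 2 < p) : ∃ C : ℝ≥0∞, C ≠ ∞ ∧ ∀ F : ℤ → (𝔼 n) → ℝ≥0∞,
    (∀ k, Measurable (F k)) →
    ∫⁻ x, (∑' k, Aop n k (F k) x ^ 2) ^ (p/2) ≤ C * ∫⁻ x, (∑' k, F k x ^ 2) ^ (p/2) := by
  set r := p / 2 with hr
  have hr1 : 1 < r := by rw [hr]; linarith
  have hc : r.HolderConjugate r.conjExponent := Real.HolderConjugate.conjExponent hr1
  set r' := r.conjExponent
  obtain ⟨C, hC, hM⟩ := HLM_strong (n := n) r' hc.symm.lt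
  have hr0' := hc.symm.pos
  refine ⟨(4 * vol1 n * C ^ (1/r')) ^ r, ?_, ?_⟩
  · refine ENNReal.rpow_ne_top_of_nonneg (by linarith) ?_
    have := ENNReal.rpow_ne_top_of_nonneg (show 0 ≤ 1/r' by positivity) hC
    have := vol1_ne_top (n := n)
    finiteness
  intro F hF
  have hG : Measurable fun x => ∑' k, Aop n k (F k) x ^ 2 :=
    Measurable.tsum fun k => (meas_Aop k (hF k)).pow_const 2
  have hH : Measurable fun x => ∑' k, F k x ^ 2 :=
    Measurable.tsum fun k => (hF k).pow_const 2
  set J := ∫⁻ x, (∑' k, F k x ^ 2) ^ r with hJ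
  have := dual_Lp hc hG (4 * vol1 n * C ^ (1/r') * J ^ (1/r)) ?_
  · refine this.trans (le_of_eq ?_)
    rw [ENNReal.mul_rpow_of_nonneg _ _ (by linarith), ← ENNReal.rpow_mul, one_div r,
      inv_mul_cancel₀ (by linarith), ENNReal.rpow_one]
  intro w hw
  calc ∫⁻ x, (∑' k, Aop n k (F k) x ^ 2) * w x
      = ∑' k, ∫⁻ x, Aop n k (F k) x ^ 2 * w x := by
        simp_rw [← ENNReal.tsum_mul_right]
        rw [lintegral_tsum]
        intro k
        have := hF k
        fun_prop
    _ ≤ ∑' k, 2 * vol1 n * ∫⁻ x, F k x ^ 2 * (2 * HLM n w x) := by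
        gcongr with k
        refine (Aop_weight k (hF k) hw).trans ?_
        gcongr with x
        exact Aop_le k hw x
    _ = 2 * vol1 n * ∫⁻ x, (∑' k, F k x ^ 2) * (2 * HLM n w x) := by
        rw [ENNReal.tsum_mul_left, ← lintegral_tsum]
        · simp_rw [ENNReal.tsum_mul_right]
        intro k
        have := hF k
        have := meas_HLM hw
        fun_prop
    _ = 4 * vol1 n * ∫⁻ x, ((fun x => ∑' k, F k x ^ 2) * HLM n w) x := by
        have : ∀ x, (∑' k, F k x ^ 2) * (2 * HLM n w x) =
          2 * ((fun x => ∑' k, F k x ^ 2) * HLM n w) x := by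
          intro x; simp only [Pi.mul_apply]; ring
        simp_rw [this]
        rw [lintegral_const_mul' _ _ (by simp)]
        ring
    _ ≤ 4 * vol1 n * (J ^ (1/r) * (C * ∫⁻ x, w x ^ r') ^ (1/r')) := by
        gcongr
        refine (lintegral_mul_le_Lp_mul_Lq _ hc hH.aemeasurable (meas_HLM hw).aemeasurable).trans ?_
        gcongr
        exact hM w hw
    _ = _ := by
        rw [ENNReal.mul_rpow_of_nonneg _ _ (by positivity)]; ring

lemma VV_eq : ∃ C : ℝ≥0∞, C ≠ ∞ ∧ ∀ F : ℤ → (𝔼 n) → ℝ≥0∞,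
    (∀ k, Measurable (F k)) →
    ∫⁻ x, (∑' k, Aop n k (F k) x ^ 2) ^ ((2:ℝ)/2) ≤ C * ∫⁻ x, (∑' k, F k x ^ 2) ^ ((2:ℝ)/2) := by
  refine ⟨2 * vol1 n * (2 * vol1 n), ?_, ?_⟩
  · have := vol1_ne_top (n := n)
    finiteness
  intro F hF
  simp only [div_self (two_ne_zero (α := ℝ)), ENNReal.rpow_one]
  rw [lintegral_tsum, lintegral_tsum, ← ENNReal.tsum_mul_left]
  · gcongr with k
    have := Aop_weight k (hF k) (measurable_const (a := (1:ℝ≥0∞)))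
    simp only [mul_one] at this
    refine this.trans ?_
    rw [mul_assoc (2 * vol1 n), ← lintegral_const_mul' (2 * vol1 n) (fun a => F k a ^ 2)]
    · refine mul_le_mul_right (lintegral_mono fun x => ?_) _
      rw [mul_comm]
      exact mul_le_mul_left (Aop_one_le k x) _
    · have := vol1_ne_top (n := n)
      finiteness
  · intro k; have := hF k; fun_prop
  · intro k; have := hF k; fun_prop

lemma VV_lt (p : ℝ) (hp1 : 1 < p) (hp : p < 2) : ∃ C : ℝ≥0∞, C ≠ ∞ ∧ ∀ F : ℤ → (𝔼 n) → ℝ≥0∞,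
    (∀ k, Measurable (F k)) →
    ∫⁻ x, (∑' k, Aop n k (F k) x ^ 2) ^ (p/2) ≤ C * ∫⁻ x, (∑' k, F k x ^ 2) ^ (p/2) := by
  set a := 1 - p / 2 with ha
  have ha0 : 0 < a := by rw [ha]; linarith
  have ha1 : a < 1 := by rw [ha]; linarith
  set q := (p/2) / a with hq
  have hq1 : 1 < q := by rw [hq, one_lt_div ha0]; linarith
  have haq : a * q = p / 2 := by rw [hq]; field_simp
  obtain ⟨C, hC, hM⟩ := HLM_strong (n := n) q hq1
  have hvt := vol1_ne_top (n := n)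
  set D := (2 * vol1 n) ^ (p/2) * (2 ^ q * C) ^ a with hD
  refine ⟨D + 1, ?_, ?_⟩
  · have h1 := ENNReal.rpow_ne_top_of_nonneg (show 0 ≤ p/2 by positivity)
      (ENNReal.mul_ne_top ENNReal.ofNat_ne_top hvt : 2 * vol1 n ≠ ∞)
    have h0 : (2:ℝ≥0∞) ^ q ≠ ∞ := ENNReal.rpow_ne_top_of_nonneg (by linarith) (by simp)
    have h2 := ENNReal.rpow_ne_top_of_nonneg ha0.le (ENNReal.mul_ne_top h0 hC)
    exact ENNReal.add_ne_top.2 ⟨ENNReal.mul_ne_top h1 h2, by simp⟩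
  intro F hF
  set H : (𝔼 n) → ℝ≥0∞ := fun x => ∑' k, F k x ^ 2 with hHdef
  have hH : Measurable H := Measurable.tsum fun k => (hF k).pow_const 2
  change _ ≤ (D + 1) * ∫⁻ x, H x ^ (p/2)
  set I := ∫⁻ x, H x ^ (p/2) with hI
  by_cases hIt : I = ∞
  · rw [hIt, ENNReal.mul_top (by simp)]; exact le_top
  have hfin : ∀ᵐ x, H x ≠ ∞ := by
    filter_upwards [ae_lt_top (hH.pow_const (p/2)) hIt] with x hx
    intro h
    rw [h, ENNReal.top_rpow_of_pos (by linarith)] at hx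
    exact lt_irrefl _ hx
  have hle : ∀ k x, F k x ^ 2 ≤ H x := fun k x => ENNReal.le_tsum (f := fun k => F k x ^ 2) k
  set W : (𝔼 n) → ℝ≥0∞ := fun x => 2 * HLM n (fun y => H y ^ a) x with hW
  have hWm : Measurable W := (meas_HLM (hH.pow_const a)).const_mul 2
  set g : ℤ → (𝔼 n) → ℝ≥0∞ := fun k y => F k y ^ 2 * H y ^ (-a) with hg
  have hgm : ∀ k, Measurable (g k) := fun k => ((hF k).pow_const 2).mul (hH.pow_const (-a))
  set S : (𝔼 n) → ℝ≥0∞ := fun x => ∑' k, Aop n k (g k) x with hS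
  have hSm : Measurable S := Measurable.tsum fun k => meas_Aop k (hgm k)
  have h1 : ∀ k x, Aop n k (F k) x ^ 2 ≤ Aop n k (g k) x * W x := by
    intro k x
    have hcs := Aop_CS k (f := fun y => F k y * H y ^ (-(a/2))) (g := fun y => H y ^ (a/2))
      ((hF k).mul (hH.pow_const _)) (hH.pow_const _) x
    have e1 : (fun y => (F k y * H y ^ (-(a/2))) ^ 2) = g k := by
      ext y
      simp only [hg]
      rw [mul_pow, ← ENNReal.rpow_natCast (H y ^ _), ← ENNReal.rpow_mul]
      congr 2; push_cast; ring
    have e2 : (fun y => (H y ^ (a/2)) ^ 2) = fun y => H y ^ a := by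
      ext y
      rw [← ENNReal.rpow_natCast (H y ^ _), ← ENNReal.rpow_mul]
      congr 1; push_cast; ring
    rw [e1, e2] at hcs
    have h2 : Aop n k (F k) x ≤ Aop n k (fun y => F k y * H y ^ (-(a/2)) * H y ^ (a/2)) x := by
      unfold Aop
      refine lintegral_mono_ae ?_
      filter_upwards [hfin] with y hy
      gcongr
      by_cases h0 : H y = 0
      · have := hle k y
        rw [h0] at this
        simp only [nonpos_iff_eq_zero, pow_eq_zero_iff, ne_eq, OfNat.ofNat_ne_zero, not_false_eq_true] at this
        simp [this]
      · rw [mul_assoc, ← ENNReal.rpow_add _ _ h0 hy]; simp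
    calc _ ≤ _ := pow_le_pow_left' h2 2
      _ ≤ _ := hcs
      _ ≤ _ := mul_le_mul_right (Aop_le k (hH.pow_const a) x) _
  have h3 : ∀ x, (∑' k, Aop n k (F k) x ^ 2) ^ (p/2) ≤ S x ^ (p/2) * (W x ^ q) ^ a := by
    intro x
    rw [← ENNReal.rpow_mul, mul_comm q a, haq, ← ENNReal.mul_rpow_of_nonneg _ _ (by linarith)]
    gcongr
    simp only [hS]
    rw [← ENNReal.tsum_mul_right]
    gcongr with k
    exact h1 k x
  have hSI : ∫⁻ x, S x ≤ 2 * vol1 n * I := by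
    simp only [hS]
    rw [lintegral_tsum (fun k => (meas_Aop k (hgm k)).aemeasurable)]
    calc ∑' k, ∫⁻ x, Aop n k (g k) x ≤ ∑' k, 2 * vol1 n * ∫⁻ x, g k x := by
          gcongr with k
          have := Aop_dual k (hgm k) (measurable_const (a := (1:ℝ≥0∞)))
          simp only [mul_one] at this
          rw [this, ← lintegral_const_mul _ (hgm k)]
          refine lintegral_mono fun x => ?_
          rw [mul_comm]
          exact mul_le_mul_left (Aop_one_le k x) _
      _ = 2 * vol1 n * ∫⁻ x, H x * H x ^ (-a) := by
          rw [ENNReal.tsum_mul_left, ← lintegral_tsum (fun k => (hgm k).aemeasurable)]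
          simp only [hg, hHdef, ENNReal.tsum_mul_right]
      _ ≤ _ := by
          gcongr 2 * vol1 n * ?_
          refine lintegral_mono_ae ?_
          filter_upwards [hfin] with x hx
          by_cases h0 : H x = 0
          · simp [h0]
          · conv_lhs => rw [← ENNReal.rpow_one (H x), ← ENNReal.rpow_mul, ← ENNReal.rpow_add _ _ h0 hx]
            refine le_of_eq ?_
            congr 1
            rw [ha]; ring
  have hWI : ∫⁻ x, W x ^ q ≤ 2 ^ q * C * I := by
    simp only [hW]
    simp_rw [ENNReal.mul_rpow_of_nonneg _ _ (show 0 ≤ q by linarith)]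
    rw [lintegral_const_mul _ ((meas_HLM (hH.pow_const a)).pow_const q), mul_assoc]
    gcongr
    refine (hM _ (hH.pow_const a)).trans (le_of_eq ?_)
    simp_rw [← ENNReal.rpow_mul, haq]
    rfl
  calc _ ≤ ∫⁻ x, S x ^ (p/2) * (W x ^ q) ^ a := lintegral_mono h3
    _ ≤ (∫⁻ x, S x) ^ (p/2) * (∫⁻ x, W x ^ q) ^ a :=
        lintegral_mul_norm_pow_le hSm.aemeasurable (hWm.pow_const q).aemeasurable (by linarith)
          ha0.le (by rw [ha]; ring)
    _ ≤ (2 * vol1 n * I) ^ (p/2) * (2 ^ q * C * I) ^ a := by gcongr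
    _ = D * I := by
        rw [ENNReal.mul_rpow_of_nonneg _ _ (by linarith), ENNReal.mul_rpow_of_nonneg (2 ^ q * C) _ ha0.le]
        have : I = I ^ (p/2) * I ^ a := by
          rw [← ENNReal.rpow_add_of_nonneg _ _ (by linarith) ha0.le, ha]; simp
        conv_rhs => rw [this, hD]
        ring
    _ ≤ _ := by gcongr; exact le_self_add

lemma VV (p : ℝ) (hp1 : 1 < p) : ∃ C : ℝ≥0∞, C ≠ ∞ ∧ ∀ F : ℤ → (𝔼 n) → ℝ≥0∞,
    (∀ k, Measurable (F k)) →
    ∫⁻ x, (∑' k, Aop n k (F k) x ^ 2) ^ (p/2) ≤ C * ∫⁻ x, (∑' k, F k x ^ 2) ^ (p/2) := by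
  rcases lt_trichotomy p 2 with h | h | h
  · exact VV_lt p hp1 h
  · subst h; exact VV_eq
  · exact VV_gt p h

end CommPf

namespace CommPf
variable {n : ℕ}
local notation "𝔼" n => EuclideanSpace ℝ (Fin n)

def Rk (n : ℕ) (k : ℤ) (u : 𝔼 n) : ℝ :=
  (2:ℝ) ^ (-(k * (n:ℤ))) * ((1 + ‖(2:ℝ) ^ (-k) • u‖) ^ (n+1))⁻¹

lemma Rk_nonneg (k : ℤ) (u : 𝔼 n) : 0 ≤ Rk n k u := by unfold Rk; positivity

lemma Rk_cont (k : ℤ) : Continuous (Rk n k) := by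
  unfold Rk
  refine continuous_const.mul (Continuous.inv₀ (by fun_prop) fun u => ?_)
  positivity

lemma Rk_le (k : ℤ) (u : 𝔼 n) :
    ENNReal.ofReal (Rk n k u) ≤ ENNReal.ofReal (2 ^ (n+1)) * Ker n k u := by
  set ρ := ‖(2:ℝ) ^ (-k) • u‖ with hρ
  have hρ0 : 0 ≤ ρ := norm_nonneg _
  obtain ⟨i, hi1, hi2⟩ := exists_nat_pow_near (show 1 ≤ 1 + ρ by linarith) (show (1:ℝ) < 2 by norm_num)
  have hρe : ρ = (2:ℝ)^(-k) * ‖u‖ := by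
    rw [hρ, norm_smul, Real.norm_of_nonneg (by positivity)]
  have hu : ‖u‖ ≤ (2:ℝ) ^ (k + ((i+1 : ℕ) : ℤ)) := by
    rw [zpow_add₀ (by norm_num), zpow_natCast]
    have : ‖u‖ = (2:ℝ)^k * ρ := by
      rw [hρe, ← mul_assoc, ← zpow_add₀ (by norm_num)]; simp
    rw [this]
    gcongr
    linarith
  have h1 : (2⁻¹ : ℝ≥0∞) ^ (i+1) * (cst n (k + ((i+1 : ℕ) : ℤ)) * 1) ≤ Ker n k u := by
    unfold Ker
    refine le_trans (le_of_eq ?_) (ENNReal.le_tsum (i+1))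
    rw [Set.indicator_of_mem (by simpa using hu)]
    simp
  refine le_trans ?_ (mul_le_mul_right h1 _)
  have e : (2⁻¹ : ℝ≥0∞) ^ (i+1) = ENNReal.ofReal (((2:ℝ)^(i+1))⁻¹) := by
    rw [ENNReal.ofReal_inv_of_pos (by positivity), ENNReal.ofReal_pow (by norm_num),
      ENNReal.inv_pow]
    simp
  rw [e, cst, mul_one, ← ENNReal.ofReal_mul (by positivity), ← ENNReal.ofReal_mul (by positivity)]
  refine ENNReal.ofReal_le_ofReal ?_
  unfold Rk
  rw [← hρ]
  have e2 : (2:ℝ) ^ (-((k + ((i+1 : ℕ) : ℤ)) * (n:ℤ))) =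
      (2:ℝ) ^ (-(k * (n:ℤ))) * (((2:ℝ)^(i+1))^n)⁻¹ := by
    rw [add_mul, neg_add, zpow_add₀ (by norm_num), zpow_neg _ (((i+1 : ℕ) : ℤ) * n), zpow_mul,
      zpow_natCast, zpow_natCast]
  rw [e2]
  have h2 : ((1 + ρ) ^ (n+1))⁻¹ ≤ (((2:ℝ)^i)^(n+1))⁻¹ := by gcongr
  calc _ ≤ (2:ℝ) ^ (-(k * (n:ℤ))) * (((2:ℝ)^i)^(n+1))⁻¹ := by gcongr
    _ = _ := by
      have : ((2:ℝ)^i)^(n+1) = ((2:ℝ)^(i+1) * ((2:ℝ)^(i+1))^n) * (2^(n+1))⁻¹ := by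
        rw [pow_succ (2:ℝ) i, mul_pow]; field_simp; ring
      rw [this]
      field_simp

lemma schwartz_decay (φ : SchwartzMap (𝔼 n) ℝ) : ∃ C : ℝ, 0 < C ∧
    (∀ u, |φ u| * (1 + ‖u‖) ^ (n+2) ≤ C) ∧ ∀ u, ‖fderiv ℝ φ u‖ * (1 + ‖u‖) ^ (n+2) ≤ C := by
  set C := (2:ℝ) ^ (n+2) * (Finset.Iic ((n+2, 1) : ℕ × ℕ)).sup
    (fun m => SchwartzMap.seminorm ℝ m.1 m.2) φ with hC
  have h0 := fun u => SchwartzMap.one_add_le_sup_seminorm_apply (𝕜 := ℝ) (m := (n+2, 1))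
    (k := n+2) (n := 0) le_rfl (by simp) φ u
  have h1 := fun u => SchwartzMap.one_add_le_sup_seminorm_apply (𝕜 := ℝ) (m := (n+2, 1))
    (k := n+2) (n := 1) le_rfl le_rfl φ u
  refine ⟨C + 1, ?_, fun u => ?_, fun u => ?_⟩
  · have : 0 ≤ C := le_trans (by positivity) (h0 0)
    linarith
  · have := h0 u
    rw [norm_iteratedFDeriv_zero, Real.norm_eq_abs] at this
    rw [mul_comm]; linarith
  · have := h1 u
    rw [norm_iteratedFDeriv_one] at this
    rw [mul_comm]; linarith

/-- shift bound -/
lemma decay_shift {C a : ℝ} (hC : 0 < C) {u v : 𝔼 n} (huv : ‖v - u‖ ≤ 1)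
    (h : a * (1 + ‖v‖) ^ (n+2) ≤ C) :
    a * (1 + ‖u‖) ≤ C * 2 ^ (n+2) * ((1 + ‖u‖) ^ (n+1))⁻¹ := by
  have h1 : 1 + ‖u‖ ≤ 2 * (1 + ‖v‖) := by
    have : ‖u‖ ≤ ‖v‖ + ‖v - u‖ := by
      have := norm_sub_norm_le u v
      rw [norm_sub_rev] at this; linarith
    have := norm_nonneg v
    linarith
  by_cases ha : a ≤ 0
  · calc a * (1 + ‖u‖) ≤ 0 := mul_nonpos_of_nonpos_of_nonneg ha (by positivity)
      _ ≤ _ := by positivity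
  push Not at ha
  rw [← div_eq_mul_inv, le_div_iff₀ (by positivity)]
  calc a * (1 + ‖u‖) * (1 + ‖u‖) ^ (n+1) = a * (1 + ‖u‖) ^ (n+2) := by ring
    _ ≤ a * (2 * (1 + ‖v‖)) ^ (n+2) := by gcongr
    _ = (a * (1 + ‖v‖) ^ (n+2)) * 2 ^ (n+2) := by rw [mul_pow]; ring
    _ ≤ _ := by gcongr

lemma pointwise (φ : SchwartzMap (𝔼 n) ℝ) : ∃ D : ℝ, 0 < D ∧
    ∀ (b : (𝔼 n) → ℝ) (L : ℝ≥0), LipschitzWith L b → ∀ (k : ℤ) (f : (𝔼 n) → ℝ), Measurable f →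
    ∀ x, ENNReal.ofReal ‖gradient (fun z => b z * schwartzConv n φ k f z -
                schwartzConv n φ k (fun y => b y * f y) z) x‖ ≤
      ENNReal.ofReal D * (L : ℝ≥0∞) * Aop n k (fun y => ENNReal.ofReal |f y|) x := by
  obtain ⟨C, hC, hd0, hd1⟩ := schwartz_decay φ
  set C1 := C * 2 ^ (n+2) with hC1
  have hC10 : 0 < C1 := by positivity
  refine ⟨2 * C1 * 2 ^ (n+1), by positivity, ?_⟩
  intro b L hb k f hf x
  have hbl : ∀ y z, |b y - b z| ≤ L * ‖y - z‖ := fun y z => by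
    have := hb.dist_le_mul y z
    rwa [Real.dist_eq, dist_eq_norm] at this
  by_cases hL : L = 0
  · have hbc : ∀ y, b y = b x := by
      intro y
      have := hbl y x
      simp only [hL, NNReal.coe_zero, zero_mul] at this
      have := abs_nonpos_iff.1 this
      linarith
    have : (fun z => b z * schwartzConv n φ k f z -
                schwartzConv n φ k (fun y => b y * f y) z) = fun _ => 0 := by
      ext z
      have : schwartzConv n φ k (fun y => b y * f y) z = b x * schwartzConv n φ k f z := by
        unfold schwartzConv
        rw [← integral_const_mul]
        congr 1
        ext y
        beta_reduce
        rw [hbc y]; ring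
      rw [this, hbc z]; ring
    rw [this]
    simp [gradient]
  by_cases hA : Aop n k (fun y => ENNReal.ofReal |f y|) x = ∞
  · rw [hA, ENNReal.mul_top]
    · exact le_top
    · refine mul_ne_zero ?_ (by simpa using hL)
      simp only [ne_eq, ENNReal.ofReal_eq_zero, not_le]; positivity
  set c : ℝ := (2:ℝ) ^ (-(k * (n:ℤ))) with hc
  have hc0 : 0 < c := by positivity
  set s : ℝ := (2:ℝ) ^ (-k) with hs
  have hs0 : 0 < s := by positivity
  set g : (𝔼 n) → ℝ := fun y => Rk n k (x - y) * |f y| with hg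
  have hg0 : ∀ y, 0 ≤ g y := fun y => mul_nonneg (Rk_nonneg _ _) (abs_nonneg _)
  have hRm : Measurable fun y => Rk n k (x - y) :=
    ((Rk_cont k).comp (continuous_const.sub continuous_id)).measurable
  have hgm : Measurable g := hRm.mul (by fun_prop)
  have hgl : ∫⁻ y, ENNReal.ofReal (g y) ≤ ENNReal.ofReal (2 ^ (n+1)) *
      Aop n k (fun y => ENNReal.ofReal |f y|) x := by
    unfold Aop
    rw [← lintegral_const_mul' _ _ (by simp)]
    refine lintegral_mono fun y => ?_
    simp only [hg]
    rw [ENNReal.ofReal_mul (Rk_nonneg _ _), ← mul_assoc]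
    exact mul_le_mul_left (Rk_le k _) _
  have hgi : Integrable g := by
    refine (lintegral_ofReal_ne_top_iff_integrable hgm.aestronglyMeasurable
      (Filter.Eventually.of_forall hg0)).1 ?_
    exact ne_top_of_le_ne_top (ENNReal.mul_ne_top (by simp) hA) hgl
  have hgI : ENNReal.ofReal (∫ y, g y) ≤ ENNReal.ofReal (2 ^ (n+1)) *
      Aop n k (fun y => ENNReal.ofReal |f y|) x := by
    rw [ofReal_integral_eq_lintegral_ofReal hgi (Filter.Eventually.of_forall hg0)]
    exact hgl
  set ψ : (𝔼 n) → (𝔼 n) → ℝ := fun z y => c * φ (s • (z - y)) with hψ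
  have hψm : ∀ z, Measurable (ψ z) := by
    intro z
    simp only [hψ]
    have : Continuous φ := φ.continuous
    exact (Continuous.measurable (by fun_prop))
  have hnu : ∀ y, ‖s • (x - y)‖ = s * ‖x - y‖ := fun y => by
    rw [norm_smul, Real.norm_of_nonneg hs0.le]
  have hR : ∀ y, Rk n k (x - y) = c * ((1 + ‖s • (x - y)‖) ^ (n+1))⁻¹ := fun y => rfl
  -- bounds
  have B1 : ∀ z, s * ‖z - x‖ ≤ 1 → ∀ y, |ψ z y| * (1 + s * ‖x - y‖) ≤ C1 * Rk n k (x - y) := by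
    intro z hz y
    have huv : ‖s • (z - y) - s • (x - y)‖ ≤ 1 := by
      rw [← smul_sub, norm_smul, Real.norm_of_nonneg hs0.le]; simpa using hz
    have := decay_shift hC huv (hd0 _)
    rw [hR, ← hnu, hψ]
    simp only []
    rw [abs_mul, abs_of_pos hc0]
    calc c * |φ (s • (z - y))| * (1 + ‖s • (x - y)‖)
        = c * (|φ (s • (z - y))| * (1 + ‖s • (x - y)‖)) := by ring
      _ ≤ c * (C * 2 ^ (n+2) * ((1 + ‖s • (x - y)‖) ^ (n+1))⁻¹) := by gcongr
      _ = _ := by rw [hC1]; ring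
  have B2 : ∀ z, s * ‖z - x‖ ≤ 1 → ∀ y, |ψ z y - ψ x y| * (1 + s * ‖x - y‖) ≤
      s * ‖z - x‖ * (C1 * Rk n k (x - y)) := by
    intro z hz y
    have huv0 : ‖s • (z - y) - s • (x - y)‖ = s * ‖z - x‖ := by
      rw [← smul_sub, norm_smul, Real.norm_of_nonneg hs0.le]; simp
    have hbd : ∀ v ∈ Metric.closedBall (s • (x - y)) 1, ‖fderiv ℝ φ v‖ ≤
        C1 * ((1 + ‖s • (x - y)‖) ^ (n+1))⁻¹ / (1 + ‖s • (x - y)‖) := by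
      intro v hv
      rw [le_div_iff₀ (by positivity)]
      rw [mem_closedBall_iff_norm] at hv
      exact decay_shift hC hv (hd1 v)
    have hmvt := (convex_closedBall (s • (x - y)) 1).norm_image_sub_le_of_norm_fderiv_le
      (𝕜 := ℝ) (f := φ) (fun v _ => φ.differentiableAt) hbd
      (Metric.mem_closedBall_self zero_le_one)
      (show s • (z - y) ∈ _ by rw [mem_closedBall_iff_norm, huv0]; exact hz)
    rw [huv0, Real.norm_eq_abs] at hmvt
    rw [hR, ← hnu, hψ]
    simp only []
    rw [← mul_sub, abs_mul, abs_of_pos hc0]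
    calc c * |φ (s • (z - y)) - φ (s • (x - y))| * (1 + ‖s • (x - y)‖)
        ≤ c * (C1 * ((1 + ‖s • (x - y)‖) ^ (n+1))⁻¹ / (1 + ‖s • (x - y)‖) * (s * ‖z - x‖))
          * (1 + ‖s • (x - y)‖) := by gcongr
      _ = _ := by
        have : 1 + ‖s • (x - y)‖ ≠ 0 := by positivity
        field_simp
  have B1a : ∀ z, s * ‖z - x‖ ≤ 1 → ∀ y, |ψ z y| ≤ C1 * Rk n k (x - y) := by
    intro z hz y
    refine le_trans ?_ (B1 z hz y)
    refine le_mul_of_one_le_right (abs_nonneg _) ?_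
    have : 0 ≤ s * ‖x - y‖ := by positivity
    linarith
  have B1b : ∀ z, s * ‖z - x‖ ≤ 1 → ∀ y, |ψ z y| * ‖x - y‖ ≤ s⁻¹ * (C1 * Rk n k (x - y)) := by
    intro z hz y
    rw [inv_mul_eq_div, le_div_iff₀ hs0]
    refine le_trans ?_ (B1 z hz y)
    have := abs_nonneg (ψ z y)
    nlinarith
  have B2a : ∀ z, s * ‖z - x‖ ≤ 1 → ∀ y, |ψ z y - ψ x y| * ‖x - y‖ ≤
      ‖z - x‖ * (C1 * Rk n k (x - y)) := by
    intro z hz y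
    have h := B2 z hz y
    have := abs_nonneg (ψ z y - ψ x y)
    have h2 : s * (|ψ z y - ψ x y| * ‖x - y‖) ≤ s * (‖z - x‖ * (C1 * Rk n k (x - y))) := by
      nlinarith
    exact le_of_mul_le_mul_left h2 hs0
  have hbm : Measurable b := hb.continuous.measurable
  have I1 : ∀ z, s * ‖z - x‖ ≤ 1 → Integrable fun y => ψ z y * f y := by
    intro z hz
    refine (hgi.const_mul C1).mono' ((hψm z).mul hf).aestronglyMeasurable
      (Filter.Eventually.of_forall fun y => ?_)
    rw [Real.norm_eq_abs, abs_mul (ψ z y)]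
    simp only [hg]
    rw [← mul_assoc]
    gcongr
    exact B1a z hz y
  have I2 : ∀ z, s * ‖z - x‖ ≤ 1 → Integrable fun y => ψ z y * (b y * f y) := by
    intro z hz
    refine (hgi.const_mul (|b x| * C1 + L * s⁻¹ * C1)).mono'
      ((hψm z).mul (hbm.mul hf)).aestronglyMeasurable
      (Filter.Eventually.of_forall fun y => ?_)
    rw [Real.norm_eq_abs, abs_mul (ψ z y), abs_mul (b y)]
    simp only [hg]
    have hby : |b y| ≤ |b x| + L * ‖x - y‖ := by
      have h1 := hbl y x
      rw [norm_sub_rev] at h1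
      have h2 := abs_sub_abs_le_abs_sub (b y) (b x)
      linarith
    calc |ψ z y| * (|b y| * |f y|) ≤ |ψ z y| * ((|b x| + L * ‖x - y‖) * |f y|) := by gcongr
      _ = (|b x| * |ψ z y| + L * (|ψ z y| * ‖x - y‖)) * |f y| := by ring
      _ ≤ (|b x| * (C1 * Rk n k (x - y)) + L * (s⁻¹ * (C1 * Rk n k (x - y)))) * |f y| := by
        exact mul_le_mul_of_nonneg_right (add_le_add
          (mul_le_mul_of_nonneg_left (B1a z hz y) (abs_nonneg _))
          (mul_le_mul_of_nonneg_left (B1b z hz y) L.coe_nonneg)) (abs_nonneg _)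
      _ = (|b x| * C1 + L * s⁻¹ * C1) * (Rk n k (x - y) * |f y|) := by ring
  have hh : ∀ z, s * ‖z - x‖ ≤ 1 → b z * schwartzConv n φ k f z -
      schwartzConv n φ k (fun y => b y * f y) z =
      ∫ y, (b z * (ψ z y * f y) - ψ z y * (b y * f y)) := by
    intro z hz
    rw [integral_sub ((I1 z hz).const_mul _) (I2 z hz), integral_const_mul]
    rfl
  have I3 : ∀ z, s * ‖z - x‖ ≤ 1 →
      Integrable fun y => (b z * (ψ z y * f y) - ψ z y * (b y * f y)) :=
    fun z hz => ((I1 z hz).const_mul _).sub (I2 z hz)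
  have hxx : s * ‖x - x‖ ≤ 1 := by simp
  have hI0 : 0 ≤ ∫ y, g y := integral_nonneg hg0
  have hfd : ‖fderiv ℝ (fun z => b z * schwartzConv n φ k f z -
                schwartzConv n φ k (fun y => b y * f y) z) x‖ ≤ 2 * C1 * L * ∫ y, g y := by
    refine norm_fderiv_le_of_lip' ℝ (by positivity) ?_
    filter_upwards [Metric.ball_mem_nhds x (show 0 < s⁻¹ by positivity)] with z hz
    have hz : s * ‖z - x‖ ≤ 1 := by
      rw [mem_ball_iff_norm] at hz
      calc s * ‖z - x‖ ≤ s * s⁻¹ := by gcongr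
        _ = 1 := mul_inv_cancel₀ hs0.ne'
    rw [hh z hz, hh x hxx, ← integral_sub (I3 z hz) (I3 x hxx)]
    rw [mul_right_comm, ← integral_const_mul]
    refine norm_integral_le_of_norm_le (hgi.const_mul _) (Filter.Eventually.of_forall fun y => ?_)
    rw [Real.norm_eq_abs]
    calc |b z * (ψ z y * f y) - ψ z y * (b y * f y) - (b x * (ψ x y * f y) - ψ x y * (b y * f y))|
        = |(b z - b x) * ψ z y + (b x - b y) * (ψ z y - ψ x y)| * |f y| := by
          rw [← abs_mul]; congr 1; ring
      _ ≤ (|b z - b x| * |ψ z y| + |b x - b y| * |ψ z y - ψ x y|) * |f y| := by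
          gcongr
          refine (abs_add_le _ _).trans (le_of_eq ?_)
          rw [abs_mul (b z - b x), abs_mul (b x - b y)]
      _ ≤ ((L * ‖z - x‖) * (C1 * Rk n k (x - y)) + (L * ‖x - y‖) * |ψ z y - ψ x y|) * |f y| := by
          gcongr
          · exact hbl z x
          · exact B1a z hz y
          · exact hbl x y
      _ = ((L * ‖z - x‖) * (C1 * Rk n k (x - y)) + L * (|ψ z y - ψ x y| * ‖x - y‖)) * |f y| := by
          ring
      _ ≤ ((L * ‖z - x‖) * (C1 * Rk n k (x - y)) + L * (‖z - x‖ * (C1 * Rk n k (x - y)))) * |f y| := by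
          exact mul_le_mul_of_nonneg_right (add_le_add le_rfl
            (mul_le_mul_of_nonneg_left (B2a z hz y) L.coe_nonneg)) (abs_nonneg _)
      _ = _ := by simp only [hg]; ring
  have hgrad : ‖gradient (fun z => b z * schwartzConv n φ k f z -
                schwartzConv n φ k (fun y => b y * f y) z) x‖ ≤ 2 * C1 * L * ∫ y, g y := by
    unfold gradient
    rw [LinearIsometryEquiv.norm_map]
    exact hfd
  calc _ ≤ ENNReal.ofReal (2 * C1 * L * ∫ y, g y) := ENNReal.ofReal_le_ofReal hgrad
    _ = ENNReal.ofReal (2 * C1) * L * ENNReal.ofReal (∫ y, g y) := by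
        rw [ENNReal.ofReal_mul (by positivity), ENNReal.ofReal_mul (by positivity),
          ENNReal.ofReal_coe_nnreal]
    _ ≤ ENNReal.ofReal (2 * C1) * L * (ENNReal.ofReal (2 ^ (n+1)) *
      Aop n k (fun y => ENNReal.ofReal |f y|) x) := by gcongr
    _ = _ := by
        rw [ENNReal.ofReal_mul (show 0 ≤ 2 * C1 by positivity)]; ring

end CommPf

theorem stmt17 (n : ℕ) (hn : 1 ≤ n) (p : ℝ) (hp : 1 < p)
    (φ : SchwartzMap (EuclideanSpace ℝ (Fin n)) ℝ) :
    ∃ C : ℝ, 0 < C ∧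
      ∀ (b : EuclideanSpace ℝ (Fin n) → ℝ) (L : ℝ≥0), LipschitzWith L b →
      ∀ f : ℤ → EuclideanSpace ℝ (Fin n) → ℝ, (∀ k, Measurable (f k)) →
      (∫⁻ x, (∑' k : ℤ, ENNReal.ofReal
            (‖gradient (fun z => b z * schwartzConv n φ k (f k) z -
                schwartzConv n φ k (fun y => b y * f k y) z) x‖ ^ 2)) ^ (p / 2))
          ^ (1 / p)
        ≤ ENNReal.ofReal C * (L : ℝ≥0∞) *
            (∫⁻ x, (∑' k : ℤ, ENNReal.ofReal ((f k x) ^ 2)) ^ (p / 2)) ^ (1 / p) := by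
  obtain ⟨D, hD, hpt⟩ := CommPf.pointwise φ
  obtain ⟨C, hC, hVV⟩ := CommPf.VV (n := n) p hp
  have hCp : C ^ (1/p) ≠ ∞ := ENNReal.rpow_ne_top_of_nonneg (by positivity) hC
  refine ⟨D * ((C ^ (1/p)).toReal + 1), by positivity, ?_⟩
  intro b L hb f hf
  have h := hVV (fun k y => ENNReal.ofReal |f k y|) (fun k => by have := hf k; fun_prop)
  have e : ∀ k x, ENNReal.ofReal |f k x| ^ 2 = ENNReal.ofReal ((f k x) ^ 2) := by
    intro k x
    rw [← ENNReal.ofReal_pow (abs_nonneg _), sq_abs]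
  simp_rw [e] at h
  set M : ℝ≥0∞ := ENNReal.ofReal D * L with hM
  have hMt : M ≠ ∞ := by rw [hM]; finiteness
  set I := ∫⁻ x, (∑' k : ℤ, ENNReal.ofReal ((f k x) ^ 2)) ^ (p / 2) with hI
  have h1 : ∫⁻ x, (∑' k : ℤ, ENNReal.ofReal
            (‖gradient (fun z => b z * schwartzConv n φ k (f k) z -
                schwartzConv n φ k (fun y => b y * f k y) z) x‖ ^ 2)) ^ (p / 2) ≤ M ^ p * (C * I) := by
    refine le_trans ?_ (mul_le_mul_right h _)
    rw [← lintegral_const_mul' _ _ (ENNReal.rpow_ne_top_of_nonneg (by linarith) hMt)]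
    refine lintegral_mono fun x => ?_
    have e2 : M ^ p = (M ^ 2) ^ (p/2) := by
      rw [← ENNReal.rpow_natCast, ← ENNReal.rpow_mul]; congr 1; push_cast; ring
    simp only []
    rw [e2, ← ENNReal.mul_rpow_of_nonneg _ _ (by linarith), ← ENNReal.tsum_mul_left]
    gcongr with k
    rw [ENNReal.ofReal_pow (norm_nonneg _), ← mul_pow]
    exact pow_le_pow_left' (hpt b L hb k (f k) (hf k) x) 2
  have hfin : M * C ^ (1/p) ≤ ENNReal.ofReal (D * ((C ^ (1/p)).toReal + 1)) * L := by
    rw [ENNReal.ofReal_mul hD.le, mul_right_comm]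
    refine mul_le_mul_left (mul_le_mul_right ?_ _) _
    conv_lhs => rw [← ENNReal.ofReal_toReal hCp]
    exact ENNReal.ofReal_le_ofReal (by linarith)
  clear_value M
  calc _ ≤ (M ^ p * (C * I)) ^ (1/p) := by gcongr
    _ = M * C ^ (1/p) * I ^ (1/p) := by
        rw [ENNReal.mul_rpow_of_nonneg _ _ (by positivity), ENNReal.mul_rpow_of_nonneg _ _ (by positivity),
          ← ENNReal.rpow_mul, mul_one_div_cancel (by linarith), ENNReal.rpow_one, mul_assoc]
    _ ≤ _ := by exact mul_le_mul_left hfin _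
end
end
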